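/- arXiv:1102.5255 — 8 statements merged into one kernel-verified Lean document; each statement's English description precedes it below -/
import Mathlib

section
/- Let p ≥ 1, let a be a p×p real matrix with det a ≠ 0, let b₁, b₂ ∈ ℝᵖ be two row vectors, let v ∈ ℝᵖ be a column vector, and let w₁, w₂ ∈ ℝ. For t ∈ {1,2} let m_t denote the determinant of the (p+1)×(p+1) matrix obtained from a by appending the row b_t at the bottom and the column v on the right, with corner entry w_t. For t ∈ {1,2} and s ∈ {1,…,p}, let a^{ts} denote the p×p matrix obtained from a by replacing its s-th row with b_t, and let m_j^{ts} denote the determinant of the (p+1)×(p+1) matrix obtained from the bordered matrix defining m_j by replacing its s-th row (which is the s-th row of a extended by the s-th entry of v) with the row (b_t, w_t). Then for all j, t ∈ {1,2} and s ∈ {1,…,p}: (det a)·m_j^{ts} = (det a^{ts})·m_j − (det a^{js})·m_t. -/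
open Matrix

/-- `a` bordered by the column `v` and the last row `x`. -/
def brd {p : ℕ} (a : Matrix (Fin p) (Fin p) ℝ) (v : Fin p → ℝ) (x : Fin (p + 1) → ℝ) :
    Matrix (Fin (p + 1)) (Fin (p + 1)) ℝ :=
  Matrix.of (Fin.snoc (fun i : Fin p => (Fin.snoc (a i) (v i) : Fin (p + 1) → ℝ)) x)

theorem brd_updateRow_last {p : ℕ} (a : Matrix (Fin p) (Fin p) ℝ) (v : Fin p → ℝ)
    (x z : Fin (p + 1) → ℝ) : (brd a v z).updateRow (Fin.last p) x = brd a v x := by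
  ext i k
  refine Fin.lastCases ?_ (fun i => ?_) i
  · simp [brd]
  · rw [Matrix.updateRow_ne (Fin.castSucc_lt_last i).ne]
    simp [brd]

theorem brd_updateRow_castSucc {p : ℕ} (a : Matrix (Fin p) (Fin p) ℝ) (v : Fin p → ℝ)
    (x y : Fin (p + 1) → ℝ) (s : Fin p) : (brd a v x).updateRow s.castSucc y =
      brd (a.updateRow s (fun i => y i.castSucc)) (Function.update v s (y (Fin.last p))) x := by
  ext i k
  refine Fin.lastCases ?_ (fun i => ?_) i
  · rw [Matrix.updateRow_ne (Fin.castSucc_lt_last s).ne']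
    simp [brd]
  · by_cases h : i = s
    · subst h
      refine Fin.lastCases ?_ (fun k => ?_) k <;> simp [brd]
    · rw [Matrix.updateRow_ne (by simpa using h)]
      refine Fin.lastCases ?_ (fun k => ?_) k <;> simp [brd, h]

theorem det_brd_single {p : ℕ} (a : Matrix (Fin p) (Fin p) ℝ) (v : Fin p → ℝ) :
    (brd a v (Pi.single (Fin.last p) 1)).det = a.det := by
  rw [Matrix.det_succ_row _ (Fin.last p), Fin.sum_univ_castSucc]
  have h : (brd a v (Pi.single (Fin.last p) 1)).submatrix Fin.castSucc Fin.castSucc = a := by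
    ext i k
    simp [brd]
  have h2 : ∀ k, brd a v (Pi.single (Fin.last p) 1) (Fin.last p) k
      = (Pi.single (Fin.last p) 1 : Fin (p + 1) → ℝ) k := by
    intro k; simp [brd]
  have h3 : ((-1 : ℝ)) ^ (p + p) = 1 := Even.neg_one_pow ⟨p, rfl⟩
  simp [h2, h, h3, (Fin.castSucc_lt_last _).ne]

theorem det_brd_row {p : ℕ} (a : Matrix (Fin p) (Fin p) ℝ) (v : Fin p → ℝ) (i : Fin p) :
    (brd a v (Fin.snoc (a i) (v i))).det = 0 := by
  apply Matrix.det_zero_of_row_eq (Fin.castSucc_lt_last i).ne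
  ext k
  simp [brd]

/-- determinant of the bordered matrix as a linear map in its last row -/
noncomputable def dl {p : ℕ} (a : Matrix (Fin p) (Fin p) ℝ) (v : Fin p → ℝ) :
    (Fin (p + 1) → ℝ) →ₗ[ℝ] ℝ :=
  (LinearMap.proj (Fin.last p)).comp (Matrix.cramer (brd a v 0)ᵀ)

theorem dl_apply {p : ℕ} (a : Matrix (Fin p) (Fin p) ℝ) (v : Fin p → ℝ)
    (x : Fin (p + 1) → ℝ) : dl a v x = (brd a v x).det := by
  simp only [dl, LinearMap.comp_apply, LinearMap.proj_apply]
  rw [Matrix.cramer_transpose_apply, brd_updateRow_last]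

theorem brd_identity {p : ℕ} (a : Matrix (Fin p) (Fin p) ℝ) (ha : a.det ≠ 0) (v : Fin p → ℝ)
    (s : Fin p) (x y : Fin (p + 1) → ℝ) :
    a.det * ((brd a v x).updateRow s.castSucc y).det
      = (a.updateRow s (fun i => y i.castSucc)).det * (brd a v x).det
        - (a.updateRow s (fun i => x i.castSucc)).det * (brd a v y).det := by
  let g : (Fin (p + 1) → ℝ) →ₗ[ℝ] ℝ :=
    (LinearMap.proj s).comp ((Matrix.cramer aᵀ).comp (LinearMap.funLeft ℝ ℝ Fin.castSucc))
  have hg : ∀ x, g x = (a.updateRow s (fun i => x i.castSucc)).det := by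
    intro x
    simp only [g, LinearMap.comp_apply, LinearMap.proj_apply]
    rw [Matrix.cramer_transpose_apply]
    rfl
  let f : (Fin (p + 1) → ℝ) →ₗ[ℝ] ℝ :=
    a.det • dl (a.updateRow s (fun i => y i.castSucc)) (Function.update v s (y (Fin.last p)))
      - (a.updateRow s (fun i => y i.castSucc)).det • dl a v + (brd a v y).det • g
  have hf : ∀ x, f x = a.det * ((brd a v x).updateRow s.castSucc y).det
      - (a.updateRow s (fun i => y i.castSucc)).det * (brd a v x).det
      + (brd a v y).det * (a.updateRow s (fun i => x i.castSucc)).det := by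
    intro x
    simp [f, hg, dl_apply, brd_updateRow_castSucc]
  have he : f (Pi.single (Fin.last p) 1) = 0 := by
    have h0 : (a.updateRow s (fun i => (Pi.single (Fin.last p) 1 : Fin (p + 1) → ℝ) i.castSucc)).det
        = 0 := by
      apply Matrix.det_eq_zero_of_row_eq_zero s
      intro k
      simp [(Fin.castSucc_lt_last _).ne]
    rw [hf, brd_updateRow_castSucc, det_brd_single, det_brd_single, h0]
    ring
  have hr : ∀ i, f (Fin.snoc (a i) (v i)) = 0 := by
    intro i
    rw [hf, det_brd_row]
    simp only [Fin.snoc_castSucc]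
    by_cases h : i = s
    · subst h
      have h1 : (brd a v (Fin.snoc (a i) (v i))).updateRow i.castSucc y
          = (brd a v y).submatrix (Equiv.swap i.castSucc (Fin.last p)) id := by
        ext k l
        refine Fin.lastCases ?_ (fun k => ?_) k
        · rw [Matrix.updateRow_ne (Fin.castSucc_lt_last i).ne']
          simp [brd]
        · by_cases hk : k = i
          · subst hk
            simp [brd]
          · rw [Matrix.updateRow_ne (by simpa using hk)]
            rw [Matrix.submatrix_apply, Equiv.swap_apply_of_ne_of_ne (by simpa using hk)
              (Fin.castSucc_lt_last k).ne]
            simp [brd]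
      rw [h1, Matrix.det_permute, Equiv.Perm.sign_swap (Fin.castSucc_lt_last i).ne,
        show a.updateRow i (fun k => a i k) = a from Matrix.updateRow_eq_self a i]
      push_cast
      ring
    · have h1 : ((brd a v (Fin.snoc (a i) (v i))).updateRow s.castSucc y).det = 0 := by
        apply Matrix.det_zero_of_row_eq (Fin.castSucc_lt_last i).ne
        rw [Matrix.updateRow_ne (Fin.castSucc_lt_last s).ne',
          Matrix.updateRow_ne (by simpa using h)]
        ext k
        simp [brd]
      have h2 : (a.updateRow s (fun k => a i k)).det = 0 := Matrix.det_updateRow_eq_zero h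
      rw [h1, h2]
      ring
  have hx : f x = 0 := by
    let c : Fin p → ℝ := (fun i => x i.castSucc) ᵥ* a⁻¹
    have hc : c ᵥ* a = fun i => x i.castSucc := by
      simp only [c]
      rw [Matrix.vecMul_vecMul, Matrix.nonsing_inv_mul _ (isUnit_iff_ne_zero.mpr ha),
        Matrix.vecMul_one]
    have hd : x = ∑ i, c i • (Fin.snoc (a i) (v i) : Fin (p + 1) → ℝ)
        + (x (Fin.last p) - ∑ i, c i * v i) • (Pi.single (Fin.last p) 1 : Fin (p + 1) → ℝ) := by
      ext k
      refine Fin.lastCases ?_ (fun k => ?_) k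
      · simp
      · have := congrFun hc k
        simp only [Matrix.vecMul, dotProduct] at this
        simp [this, (Fin.castSucc_lt_last _).ne]
    rw [hd, map_add, map_sum, map_smul, he]
    simp [hr]
  rw [hf] at hx
  linarith

/-- Lemma 1 of the paper: the determinant identity
`(det a) · m_j^{ts} = (det a^{ts}) · m_j − (det a^{js}) · m_t`
for minors embordering a nonsingular `p × p` block `a` with one of two rows
`b₁, b₂`, a column `v` and corner entries `w₁, w₂`. -/
theorem embordering_minor_identity (p : ℕ) (hp : 1 ≤ p)
    (a : Matrix (Fin p) (Fin p) ℝ) (ha : a.det ≠ 0)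
    (b : Fin 2 → Fin p → ℝ) (v : Fin p → ℝ) (w : Fin 2 → ℝ)
    (border : Fin 2 → Matrix (Fin (p + 1)) (Fin (p + 1)) ℝ)
    (hborder : ∀ t, border t =
      Matrix.of (Fin.snoc (fun i : Fin p => Fin.snoc (a i) (v i)) (Fin.snoc (b t) (w t)))) :
    ∀ (j t : Fin 2) (s : Fin p),
      a.det * ((border j).updateRow s.castSucc (Fin.snoc (b t) (w t))).det
        = (a.updateRow s (b t)).det * (border j).det
          - (a.updateRow s (b j)).det * (border t).det := by
  intro j t s
  have h := brd_identity a ha v s (Fin.snoc (b j) (w j)) (Fin.snoc (b t) (w t))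
  simp only [Fin.snoc_castSucc] at h
  rw [hborder j, hborder t]
  exact h
end

section
/- Sylvester's determinant identity: let p, q ≥ 1 and let A be a (p+q)×(p+q) real matrix with top-left p×p block a. For k, l ∈ {1,…,q}, let m_{k,l} be the determinant of the (p+1)×(p+1) matrix obtained from a by appending at the bottom the row (A_{p+k,1},…,A_{p+k,p}), on the right the column (A_{1,p+l},…,A_{p,p+l})ᵗ, and in the corner the entry A_{p+k,p+l}. Let M be the q×q matrix with entries M_{k,l} = m_{k,l}. Then det M = (det a)^{q−1} · det A. -/
open Matrix

lemma syl_inv (p q : ℕ) (hq : 1 ≤ q) (a : Matrix (Fin p) (Fin p) ℝ) (B : Matrix (Fin p) (Fin q) ℝ)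
    (C : Matrix (Fin q) (Fin p) ℝ) (D : Matrix (Fin q) (Fin q) ℝ) (h : a.det ≠ 0) :
    (Matrix.of fun k l => (fromBlocks a (B.submatrix id (fun _ : Fin 1 => l))
      (C.submatrix (fun _ : Fin 1 => k) id) (D.submatrix (fun _ : Fin 1 => k) (fun _ : Fin 1 => l))).det).det
      = a.det ^ (q - 1) * (fromBlocks a B C D).det := by
  have : Invertible a := a.invertibleOfIsUnitDet (isUnit_iff_ne_zero.mpr h)
  have e : (Matrix.of fun k l => (fromBlocks a (B.submatrix id (fun _ : Fin 1 => l))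
      (C.submatrix (fun _ : Fin 1 => k) id)
      (D.submatrix (fun _ : Fin 1 => k) (fun _ : Fin 1 => l))).det)
      = a.det • (D - C * ⅟a * B) := by
    ext k l
    simp only [of_apply, det_fromBlocks₁₁, Matrix.smul_apply, smul_eq_mul, det_fin_one]
    simp [Matrix.mul_apply]
  rw [e, det_smul, det_fromBlocks₁₁, ← mul_assoc, ← pow_succ, Fintype.card_fin,
    Nat.sub_add_cancel hq]

lemma syl_block (p q : ℕ) (hq : 1 ≤ q) (a : Matrix (Fin p) (Fin p) ℝ) (B : Matrix (Fin p) (Fin q) ℝ)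
    (C : Matrix (Fin q) (Fin p) ℝ) (D : Matrix (Fin q) (Fin q) ℝ) :
    (Matrix.of fun k l => (fromBlocks a (B.submatrix id (fun _ : Fin 1 => l))
      (C.submatrix (fun _ : Fin 1 => k) id) (D.submatrix (fun _ : Fin 1 => k) (fun _ : Fin 1 => l))).det).det
      = a.det ^ (q - 1) * (fromBlocks a B C D).det := by
  have hd : Dense {t : ℝ | ((scalar (Fin p) t) - (-a)).det ≠ 0} := by
    have hf : {t : ℝ | (-a).charpoly.eval t = 0}.Finite := by
      refine ((-a).charpoly.roots.toFinset.finite_toSet).subset ?_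
      intro t ht
      simpa [(Matrix.charpoly_monic (-a)).ne_zero] using ht
    have := hf.countable.dense_compl ℝ
    convert this using 1
    ext t
    simp [Matrix.eval_charpoly]
  have hc : Continuous fun t : ℝ => (scalar (Fin p) t) - (-a) := by
    refine continuous_matrix fun i j => ?_
    simp only [Matrix.sub_apply, scalar_apply, diagonal_apply]
    split_ifs <;> fun_prop
  have key := Continuous.ext_on hd
    (f := fun t : ℝ => (Matrix.of fun k l => (fromBlocks ((scalar (Fin p) t) - (-a))
      (B.submatrix id (fun _ : Fin 1 => l)) (C.submatrix (fun _ : Fin 1 => k) id)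
      (D.submatrix (fun _ : Fin 1 => k) (fun _ : Fin 1 => l))).det).det)
    (g := fun t : ℝ => ((scalar (Fin p) t) - (-a)).det ^ (q - 1) *
      (fromBlocks ((scalar (Fin p) t) - (-a)) B C D).det)
    (by
      refine Continuous.matrix_det (continuous_matrix fun k l => ?_)
      exact Continuous.matrix_det (Continuous.matrix_fromBlocks hc continuous_const
        continuous_const continuous_const))
    (by
      exact (hc.matrix_det.pow _).mul (Continuous.matrix_det (Continuous.matrix_fromBlocks hc
        continuous_const continuous_const continuous_const)))
    (fun t ht => syl_inv p q hq _ B C D ht)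
  simpa using congrFun key 0

/-- Sylvester's determinant identity: if `a` is the top-left `p × p` block of a
`(p+q) × (p+q)` real matrix `A` and `M` is the `q × q` matrix of the minors of `A`
embordering the block `a`, then `det M = (det a)^(q-1) · det A`. -/
theorem sylvester_determinant_identity (p q : ℕ) (hp : 1 ≤ p) (hq : 1 ≤ q)
    (A : Matrix (Fin (p + q)) (Fin (p + q)) ℝ)
    (a : Matrix (Fin p) (Fin p) ℝ)
    (ha : ∀ i j, a i j = A (Fin.castAdd q i) (Fin.castAdd q j))
    (M : Matrix (Fin q) (Fin q) ℝ)
    (hM : ∀ k l, M k l =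
      (Matrix.of (Fin.snoc
        (fun i : Fin p => Fin.snoc (a i) (A (Fin.castAdd q i) (Fin.natAdd p l)))
        (Fin.snoc (fun j : Fin p => A (Fin.natAdd p k) (Fin.castAdd q j))
          (A (Fin.natAdd p k) (Fin.natAdd p l))))).det) :
    M.det = a.det ^ (q - 1) * A.det := by

  have h1 : A.det = (fromBlocks a (A.submatrix (Fin.castAdd q) (Fin.natAdd p))
      (A.submatrix (Fin.natAdd p) (Fin.castAdd q))
      (A.submatrix (Fin.natAdd p) (Fin.natAdd p))).det := by
    rw [← det_submatrix_equiv_self finSumFinEquiv A]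
    congr 1
    ext (i | i) (j | j) <;> simp [ha]
  rw [h1, ← syl_block p q hq]
  congr 1
  ext k l
  rw [hM, of_apply, ← det_submatrix_equiv_self (finSumFinEquiv : Fin p ⊕ Fin 1 ≃ Fin (p + 1))]
  congr 1
  have hl : ∀ x : Fin 1, Fin.natAdd p x = Fin.last p := by
    intro x; ext; simp
  have hcs : ∀ x : Fin p, Fin.castAdd 1 x = x.castSucc := fun _ => rfl
  ext (i | i) (j | j) <;> simp only [submatrix_apply, finSumFinEquiv_apply_left,
    finSumFinEquiv_apply_right, hl, hcs, of_apply, Fin.snoc_castSucc, Fin.snoc_last,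
    fromBlocks_apply₁₁, fromBlocks_apply₁₂, fromBlocks_apply₂₁, fromBlocks_apply₂₂, id]
end

section
/- Let U₁,…,U_N and Ψ be as in the context, and suppose det W(U₁,…,U_M;U_{M+1},…,U_N)(x) ≠ 0 on an open interval. Define φ_j(x) = det W_j(U₁,…,U_M;U_{M+1},…,U_N,Ψ)(x) / det W(U₁,…,U_M;U_{M+1},…,U_N)(x) for j = 1,…,n. Then on that interval, φ_j′ = (Γ_j − Σ_{l=1}^n φ_l · det W_{j,l}(U₁,…,U_M;U_{M+1},…,U_N)) / det W(U₁,…,U_M;U_{M+1},…,U_N), where Γ_j is the determinant of the matrix obtained from W_j(U₁,…,U_M;U_{M+1},…,U_N,Ψ) by differentiating entrywise its last row. -/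
open Matrix

noncomputable section

namespace SingularDarboux

variable {n : ℕ}

/-- Entrywise derivative `∂` of a matrix-valued function. -/
def matD (U : ℝ → Matrix (Fin n) (Fin n) ℝ) : ℝ → Matrix (Fin n) (Fin n) ℝ :=
  fun x => Matrix.of fun i j => deriv (fun t => U t i j) x

/-- The operator `D_m` acting on matrix-valued functions: it differentiates the
first `m` rows and keeps the remaining rows unchanged. -/
def matDm (m : ℕ) (U : ℝ → Matrix (Fin n) (Fin n) ℝ) : ℝ → Matrix (Fin n) (Fin n) ℝ :=
  fun x => Matrix.of fun i j => if (i : ℕ) < m then deriv (fun t => U t i j) x else U x i j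

/-- Entrywise derivative `∂` of a vector-valued function. -/
def vecD (Ψ : ℝ → Fin n → ℝ) : ℝ → Fin n → ℝ := fun x i => deriv (fun t => Ψ t i) x

/-- The operator `D_m` (equivalently `∂^{(m)}`) acting on vector-valued functions:
it differentiates the first `m` components and keeps the remaining ones unchanged. -/
def vecDm (m : ℕ) (Ψ : ℝ → Fin n → ℝ) : ℝ → Fin n → ℝ :=
  fun x i => if (i : ℕ) < m then deriv (fun t => Ψ t i) x else Ψ x i

/-- All entries of the matrix-valued function are smooth. -/
def SmoothMat (U : ℝ → Matrix (Fin n) (Fin n) ℝ) : Prop :=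
  ∀ i j, ContDiff ℝ (⊤ : ℕ∞) fun x => U x i j

/-- All components of the vector-valued function are smooth. -/
def SmoothVec (Ψ : ℝ → Fin n → ℝ) : Prop := ∀ i, ContDiff ℝ (⊤ : ℕ∞) fun x => Ψ x i

/-- `U = diag(Ũ, I_{n-m})`: outside of the top-left `m × m` block, `U` coincides with
the identity matrix. -/
def BlockDiag (m : ℕ) (U : ℝ → Matrix (Fin n) (Fin n) ℝ) : Prop :=
  ∀ (x : ℝ) (i j : Fin n), (m ≤ (i : ℕ) ∨ m ≤ (j : ℕ)) → U x i j = if i = j then 1 else 0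

/-- The `(r,k)` block (`r,k` $0$-indexed) of the matrix `W(U₁,…,U_M;U_{M+1},…,U_N)`. -/
def Wblock (m M r k : ℕ) (U : ℝ → Matrix (Fin n) (Fin n) ℝ) : ℝ → Matrix (Fin n) (Fin n) ℝ :=
  if k < M then (if r ≤ k then (matDm m)^[r] U else matD^[r] U)
  else (if r < M then (matDm m)^[r] U else matD^[r - M] ((matDm m)^[M] U))

/-- The `r`-th block of the column appended on the right in `W_j`. -/
def Wcol (m M r : ℕ) (Ψ : ℝ → Fin n → ℝ) : ℝ → Fin n → ℝ :=
  if r < M then (vecDm m)^[r] Ψ else vecD^[r - M] ((vecDm m)^[M] Ψ)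

/-- The `i`-th row of the `k`-th block of the row appended at the bottom in `W_j`
(also the replacement row used in `W_{i,j}`). -/
def Wrow (m M N k : ℕ) (U : ℝ → Matrix (Fin n) (Fin n) ℝ) (i : Fin n) : ℝ → Fin n → ℝ :=
  if k < M then (fun x => matD^[N] U x i) else (fun x => matD^[N - M] ((matDm m)^[M] U) x i)

/-- The `nN × nN` matrix `W(U₁,…,U_M;U_{M+1},…,U_N)`; rows are indexed by pairs
(block-row `r`, row `i` within the block) and similarly for columns. -/
def Wmat (m M N : ℕ) (U : ℕ → ℝ → Matrix (Fin n) (Fin n) ℝ) (x : ℝ) :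
    Matrix (Fin N × Fin n) (Fin N × Fin n) ℝ :=
  Matrix.of fun p q => Wblock m M (p.1 : ℕ) (q.1 : ℕ) (U (q.1 : ℕ)) x p.2 q.2

/-- The `(nN+1) × (nN+1)` matrix `W_j(U₁,…,U_M;U_{M+1},…,U_N,Ψ)`. -/
def WjMat (m M N : ℕ) (j : Fin n) (U : ℕ → ℝ → Matrix (Fin n) (Fin n) ℝ)
    (Ψ : ℝ → Fin n → ℝ) (x : ℝ) :
    Matrix ((Fin N × Fin n) ⊕ Unit) ((Fin N × Fin n) ⊕ Unit) ℝ :=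
  Matrix.of fun p q =>
    match p, q with
    | Sum.inl p, Sum.inl q => Wblock m M (p.1 : ℕ) (q.1 : ℕ) (U (q.1 : ℕ)) x p.2 q.2
    | Sum.inl p, Sum.inr _ => Wcol m M (p.1 : ℕ) Ψ x p.2
    | Sum.inr _, Sum.inl q => Wrow m M N (q.1 : ℕ) (U (q.1 : ℕ)) j x q.2
    | Sum.inr _, Sum.inr _ => vecD^[N - M] ((vecDm m)^[M] Ψ) x j

/-- The `nN × nN` matrix `W_{i,j}(U₁,…,U_M;U_{M+1},…,U_N)`: in the last block-row
(`r = N-1`) of `W` the `j`-th row of each block is replaced as prescribed. -/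
def WijMat (m M N : ℕ) (i j : Fin n) (U : ℕ → ℝ → Matrix (Fin n) (Fin n) ℝ) (x : ℝ) :
    Matrix (Fin N × Fin n) (Fin N × Fin n) ℝ :=
  Matrix.of fun p q =>
    if (p.1 : ℕ) = N - 1 ∧ p.2 = j then Wrow m M N (q.1 : ℕ) (U (q.1 : ℕ)) i x q.2
    else Wblock m M (p.1 : ℕ) (q.1 : ℕ) (U (q.1 : ℕ)) x p.2 q.2


section Helpers

theorem aux_det_diff {ι : Type*} [Fintype ι] [DecidableEq ι] (A : ℝ → Matrix ι ι ℝ) (x : ℝ)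
    (h : ∀ p q, DifferentiableAt ℝ (fun t => A t p q) x) :
    DifferentiableAt ℝ (fun t => (A t).det) x := by
  simp only [Matrix.det_apply]
  refine DifferentiableAt.fun_sum fun σ _ => ?_
  refine DifferentiableAt.const_smul ?_ _
  exact DifferentiableAt.fun_finsetProd fun i _ => h _ _

theorem aux_bordered {ι : Type*} [Fintype ι] [DecidableEq ι] (W : Matrix ι ι ℝ) (c a z : ι → ℝ)
    (b : ℝ) (hz : W *ᵥ z = c) (hW : W.det ≠ 0) :
    (Matrix.fromBlocks W (Matrix.of fun p (_ : Unit) => c p)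
      (Matrix.of fun (_ : Unit) q => a q) (Matrix.of fun _ _ => b)).det
      = W.det * (b - a ⬝ᵥ z) := by
  have : Invertible W := Matrix.invertibleOfIsUnitDet W (isUnit_iff_ne_zero.mpr hW)
  rw [Matrix.det_fromBlocks₁₁]
  congr 1
  rw [Matrix.mul_assoc]
  have : (⅟W * (Matrix.of fun p (_ : Unit) => c p)) = Matrix.of fun p (_ : Unit) => z p := by
    have h2 : (Matrix.of fun p (_ : Unit) => c p) = W * Matrix.of fun p (_ : Unit) => z p := by
      ext p q
      rw [← hz]
      rfl
    rw [h2, ← Matrix.mul_assoc, invOf_mul_self, Matrix.one_mul]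
  rw [this]
  simp [Matrix.mul_apply, dotProduct]

theorem aux_matD_iter {n : ℕ} (U : ℝ → Matrix (Fin n) (Fin n) ℝ) (r : ℕ) (i q : Fin n) :
    (fun x => matD^[r] U x i q) = deriv^[r] (fun x => U x i q) := by
  induction r with
  | zero => rfl
  | succ r ih =>
    rw [Function.iterate_succ_apply', Function.iterate_succ_apply', ← ih]
    rfl

theorem aux_vecD_iter {n : ℕ} (U : ℝ → Fin n → ℝ) (r : ℕ) (i : Fin n) :
    (fun x => vecD^[r] U x i) = deriv^[r] (fun x => U x i) := by
  induction r with
  | zero => rfl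
  | succ r ih =>
    rw [Function.iterate_succ_apply', Function.iterate_succ_apply', ← ih]
    rfl

theorem aux_matDm_iter {n : ℕ} (m : ℕ) (U : ℝ → Matrix (Fin n) (Fin n) ℝ) (r : ℕ) (i q : Fin n) :
    (fun x => (matDm m)^[r] U x i q) = deriv^[if (i : ℕ) < m then r else 0] (fun x => U x i q) := by
  induction r with
  | zero => simp
  | succ r ih =>
    rw [Function.iterate_succ_apply']
    by_cases h : (i : ℕ) < m
    · simp only [h, if_true] at ih ⊢
      rw [Function.iterate_succ_apply', ← ih]
      funext x
      simp [matDm, h]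
    · simp only [h, if_false] at ih ⊢
      rw [← ih]
      funext x
      simp [matDm, h]

theorem aux_vecDm_iter {n : ℕ} (m : ℕ) (U : ℝ → Fin n → ℝ) (r : ℕ) (i : Fin n) :
    (fun x => (vecDm m)^[r] U x i) = deriv^[if (i : ℕ) < m then r else 0] (fun x => U x i) := by
  induction r with
  | zero => simp
  | succ r ih =>
    rw [Function.iterate_succ_apply']
    by_cases h : (i : ℕ) < m
    · simp only [h, if_true] at ih ⊢
      rw [Function.iterate_succ_apply', ← ih]
      funext x
      simp [vecDm, h]
    · simp only [h, if_false] at ih ⊢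
      rw [← ih]
      funext x
      simp [vecDm, h]

/-- order of differentiation of a block entry -/
def auxOrd (m M r k i : ℕ) : ℕ :=
  if i < m then r else if k < M then (if r ≤ k then 0 else r) else r - M

theorem aux_Wblock {n : ℕ} (m M r k : ℕ) (U : ℝ → Matrix (Fin n) (Fin n) ℝ) (i q : Fin n) :
    (fun x => Wblock m M r k U x i q) = deriv^[auxOrd m M r k i] (fun x => U x i q) := by
  unfold Wblock auxOrd
  by_cases h1 : k < M
  · by_cases h2 : r ≤ k
    · simp only [h1, h2, if_true, aux_matDm_iter]
    · simp only [h1, h2, if_true, if_false, aux_matD_iter, ite_self]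
  · by_cases h2 : r < M
    · simp only [h1, h2, if_true, if_false, aux_matDm_iter]
      simp [h2.le]
    · simp only [h1, h2, if_false, aux_matD_iter, aux_matDm_iter, ← Function.iterate_add_apply]
      congr 2
      split_ifs <;> omega

theorem aux_Wcol {n : ℕ} (m M r : ℕ) (U : ℝ → Fin n → ℝ) (i : Fin n) :
    (fun x => Wcol m M r U x i) = deriv^[if (i : ℕ) < m then r else r - M] (fun x => U x i) := by
  unfold Wcol
  by_cases h2 : r < M
  · simp only [h2, if_true, aux_vecDm_iter]
    simp [h2.le]
  · simp only [h2, if_false, aux_vecD_iter, aux_vecDm_iter, ← Function.iterate_add_apply]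
    congr 2
    split_ifs <;> omega

theorem aux_smooth_iter (f : ℝ → ℝ) (hf : ContDiff ℝ (⊤ : ℕ∞) f) (r : ℕ) :
    Differentiable ℝ (deriv^[r] f) := by
  have h : ContDiff ℝ (⊤ : ℕ∞) (deriv^[r] f) := ContDiff.iterate_deriv r hf
  exact h.differentiable (by simp)

theorem aux_Wblock_deriv {n : ℕ} (m M r k : ℕ) (U : ℝ → Matrix (Fin n) (Fin n) ℝ) (i q : Fin n)
    (h : (i : ℕ) < m ∨ M ≤ r) (x : ℝ) :
    deriv (fun x => Wblock m M r k U x i q) x = Wblock m M (r + 1) k U x i q := by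
  have h2 := congrFun (aux_Wblock m M (r+1) k U i q) x
  rw [h2, aux_Wblock]
  have : auxOrd m M (r+1) k i = auxOrd m M r k i + 1 := by
    unfold auxOrd
    split_ifs <;> omega
  rw [this, Function.iterate_succ_apply']

theorem aux_Wcol_deriv {n : ℕ} (m M r : ℕ) (U : ℝ → Fin n → ℝ) (i : Fin n)
    (h : (i : ℕ) < m ∨ M ≤ r) (x : ℝ) :
    deriv (fun x => Wcol m M r U x i) x = Wcol m M (r + 1) U x i := by
  have h2 := congrFun (aux_Wcol m M (r+1) U i) x
  rw [h2, aux_Wcol]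
  have : (if (i : ℕ) < m then r + 1 else r + 1 - M) = (if (i : ℕ) < m then r else r - M) + 1 := by
    split_ifs <;> omega
  rw [this, Function.iterate_succ_apply']

theorem aux_deriv_iter_const (c : ℝ) (r : ℕ) :
    deriv^[r] (fun _ : ℝ => c) = fun _ => if r = 0 then c else 0 := by
  induction r with
  | zero => rfl
  | succ r ih =>
    rw [Function.iterate_succ_apply', ih]
    simp

theorem aux_Wblock_const {n : ℕ} (m M r k : ℕ) (U : ℝ → Matrix (Fin n) (Fin n) ℝ) (i q : Fin n)
    (hk : k < M) (hq : m ≤ (q : ℕ)) (hU : BlockDiag m U) (x : ℝ) :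
    Wblock m M r k U x i q = if i = q ∧ r ≤ k then 1 else 0 := by
  have h2 := congrFun (aux_Wblock m M r k U i q) x
  have h3 : (fun x => U x i q) = fun _ => if i = q then 1 else 0 := by
    funext t
    exact hU t i q (Or.inr hq)
  rw [h2, h3, aux_deriv_iter_const]
  unfold auxOrd
  by_cases hiq : i = q
  · subst hiq
    have : ¬ (i : ℕ) < m := by omega
    by_cases hr : r ≤ k
    · simp [this, hk, hr]
    · have : r ≠ 0 := by omega
      simp [*]
  · simp [hiq]

theorem aux_Wrow {n : ℕ} (m M N k : ℕ) (hMN : M ≤ N) (hk : k < N)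
    (U : ℝ → Matrix (Fin n) (Fin n) ℝ) (i : Fin n) (x : ℝ) :
    Wrow m M N k U i x = Wblock m M N k U x i := by
  unfold Wrow Wblock
  have h1 : ¬ N ≤ k := by omega
  have h2 : ¬ N < M := by omega
  simp only [h1, h2, if_false]
  split_ifs <;> rfl

theorem aux_Wj {n : ℕ} (m M N : ℕ) (hMN : M ≤ N) (j : Fin n)
    (U : ℕ → ℝ → Matrix (Fin n) (Fin n) ℝ) (Ψ : ℝ → Fin n → ℝ) (x : ℝ) :
    WjMat m M N j U Ψ x = Matrix.fromBlocks (Wmat m M N U x)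
      (Matrix.of fun p (_ : Unit) => Wcol m M (p.1 : ℕ) Ψ x p.2)
      (Matrix.of fun (_ : Unit) q => Wblock m M N (q.1 : ℕ) (U (q.1 : ℕ)) x j q.2)
      (Matrix.of fun _ _ => Wcol m M N Ψ x j) := by
  ext p q
  have h2 : ¬ N < M := by omega
  rcases p with p | p <;> rcases q with q | q
  · rfl
  · rfl
  · change Wrow m M N (q.1 : ℕ) (U (q.1 : ℕ)) j x q.2 = _
    rw [aux_Wrow m M N _ hMN q.1.2]
    rfl
  · simp [WjMat, Wcol, h2]

end Helpers

/-- Lemma 2 of the paper: derivative of the ratio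
`φ_j = det W_j(U₁,…,U_M;U_{M+1},…,U_N,Ψ) / det W(U₁,…,U_M;U_{M+1},…,U_N)`. -/
theorem deriv_ratio_formula {n : ℕ} (m M N : ℕ)
    (hm : 1 ≤ m) (hmn : m < n) (hM : 1 ≤ M) (hMN : M ≤ N)
    (U : ℕ → ℝ → Matrix (Fin n) (Fin n) ℝ) (Ψ : ℝ → Fin n → ℝ)
    (hUsmooth : ∀ k < N, SmoothMat (U k)) (hUblk : ∀ k < M, BlockDiag m (U k))
    (hΨ : SmoothVec Ψ)
    (a b : ℝ) (hdet : ∀ x ∈ Set.Ioo a b, (Wmat m M N U x).det ≠ 0)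
    (φ : Fin n → ℝ → ℝ)
    (hφ : ∀ j x, φ j x = (WjMat m M N j U Ψ x).det / (Wmat m M N U x).det)
    (Γ : Fin n → ℝ → ℝ)
    (hΓ : ∀ j x, Γ j x =
      ((WjMat m M N j U Ψ x).updateRow (Sum.inr ())
        (fun q => deriv (fun t => WjMat m M N j U Ψ t (Sum.inr ()) q) x)).det) :
    ∀ (j : Fin n), ∀ x ∈ Set.Ioo a b,
      deriv (φ j) x =
        (Γ j x - ∑ l : Fin n, φ l x * (WijMat m M N j l U x).det)
          / (Wmat m M N U x).det := by
  intro j x hx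
  classical
  set W : ℝ → Matrix (Fin N × Fin n) (Fin N × Fin n) ℝ := Wmat m M N U with hWdef
  set c : ℝ → (Fin N × Fin n) → ℝ := fun t p => Wcol m M (p.1 : ℕ) Ψ t p.2 with hc
  set a' : Fin n → ℝ → (Fin N × Fin n) → ℝ :=
    fun l t q => Wblock m M N (q.1 : ℕ) (U (q.1 : ℕ)) t l q.2 with ha
  set b' : Fin n → ℝ → ℝ := fun l t => Wcol m M N Ψ t l with hb
  have hdB : ∀ (r : ℕ) (k : Fin N) (i q : Fin n),
      Differentiable ℝ (fun t => Wblock m M r k (U k) t i q) := by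
    intro r k i q
    rw [aux_Wblock]
    exact aux_smooth_iter _ (hUsmooth k k.2 i q) _
  have hdC : ∀ (r : ℕ) (i : Fin n), Differentiable ℝ (fun t => Wcol m M r Ψ t i) := by
    intro r i
    rw [aux_Wcol]
    exact aux_smooth_iter _ (hΨ i) _
  have hdW : ∀ p q, Differentiable ℝ (fun t => W t p q) := fun p q => hdB _ _ _ _
  have hdc : ∀ p, Differentiable ℝ (fun t => c t p) := fun p => hdC _ _
  have hda : ∀ l q, Differentiable ℝ (fun t => a' l t q) := fun p q => hdB _ _ _ _
  have hdb : ∀ l, Differentiable ℝ (fun t => b' l t) := fun l => hdC _ _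
  -- the solution z of W z = c
  set z : ℝ → (Fin N × Fin n) → ℝ := fun t => (W t).det⁻¹ • Matrix.cramer (W t) (c t) with hz
  have hWz : ∀ t ∈ Set.Ioo a b, W t *ᵥ z t = c t := by
    intro t ht
    simp only [hz]
    rw [Matrix.mulVec_smul, Matrix.mulVec_cramer, smul_smul, inv_mul_cancel₀ (hdet t ht), one_smul]
  have hdz : ∀ p, DifferentiableAt ℝ (fun t => z t p) x := by
    intro p
    simp only [hz, Pi.smul_apply, smul_eq_mul, Matrix.cramer_apply]
    refine DifferentiableAt.mul (DifferentiableAt.inv (aux_det_diff W x fun p q => hdW p q x)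
      (hdet x hx)) ?_
    refine aux_det_diff _ x fun i q => ?_
    simp only [Matrix.updateCol_apply]
    split_ifs
    · exact hdc _ x
    · exact hdW _ _ x
  have hφz : ∀ l, ∀ t ∈ Set.Ioo a b, φ l t = b' l t - a' l t ⬝ᵥ z t := by
    intro l t ht
    rw [hφ, aux_Wj m M N hMN]
    have := aux_bordered (W t) (c t) (a' l t) (z t) (b' l t) (hWz t ht) (hdet t ht)
    simp only [hc, ha, hb] at this
    rw [this]
    exact mul_div_cancel_left₀ _ (hdet t ht)
  have hnhds : Set.Ioo a b ∈ nhds x := isOpen_Ioo.mem_nhds hx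
  have hz' : ∀ p, ∑ q, W x p q * deriv (fun t => z t q) x
      = deriv (fun t => c t p) x - ∑ q, deriv (fun t => W t p q) x * z x q := by
    intro p
    have h1 : (fun t => c t p) =ᶠ[nhds x] fun t => ∑ q, W t p q * z t q := by
      filter_upwards [hnhds] with t ht
      rw [← hWz t ht]
      rfl
    have h2 := h1.deriv_eq
    rw [h2, deriv_fun_sum (fun q _ => (hdW p q x).fun_mul (hdz q)), ← Finset.sum_sub_distrib]
    refine Finset.sum_congr rfl fun q _ => ?_
    rw [deriv_fun_mul (hdW p q x) (hdz q)]
    ring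
  have hφ' : deriv (φ j) x = deriv (b' j) x - ∑ q, deriv (fun t => a' j t q) x * z x q
      - ∑ q, a' j x q * deriv (fun t => z t q) x := by
    have h1 : φ j =ᶠ[nhds x] fun t => b' j t - ∑ q, a' j t q * z t q := by
      filter_upwards [hnhds] with t ht
      exact hφz j t ht
    rw [h1.deriv_eq, deriv_fun_sub (hdb j x)
      (DifferentiableAt.fun_sum fun q _ => (hda j q x).fun_mul (hdz q)),
      deriv_fun_sum (fun q _ => (hda j q x).fun_mul (hdz q)), sub_sub, ← Finset.sum_add_distrib]
    congr 1
    refine Finset.sum_congr rfl fun q _ => ?_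
    rw [deriv_fun_mul (hda j q x) (hdz q)]
  -- the left solution y of y W = a_j
  set y : (Fin N × Fin n) → ℝ := (W x).det⁻¹ • Matrix.cramer (W x)ᵀ (a' j x) with hy
  have hyW : ∀ q, ∑ p, y p * W x p q = a' j x q := by
    intro q
    have h1 : (W x)ᵀ *ᵥ y = a' j x := by
      rw [hy, Matrix.mulVec_smul, Matrix.mulVec_cramer, smul_smul, Matrix.det_transpose,
        inv_mul_cancel₀ (hdet x hx), one_smul]
    rw [← h1]
    simp only [Matrix.mulVec, dotProduct, Matrix.transpose_apply]
    exact Finset.sum_congr rfl fun p _ => mul_comm _ _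
  have hN : 1 ≤ N := hM.trans hMN
  set lastN : Fin N := ⟨N - 1, by omega⟩ with hlast
  have hWij : ∀ l, (WijMat m M N j l U x).det = (W x).det * y (lastN, l) := by
    intro l
    have h1 : WijMat m M N j l U x = (W x).updateRow (lastN, l) (a' j x) := by
      ext p q
      simp only [WijMat, Matrix.updateRow_apply, Matrix.of_apply, Prod.ext_iff, hlast, Fin.ext_iff,
        aux_Wrow m M N _ hMN q.1.2, ha, hWdef, Wmat]
    rw [h1, hy, Pi.smul_apply, smul_eq_mul, Matrix.cramer_transpose_apply, ← mul_assoc,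
      mul_inv_cancel₀ (hdet x hx), one_mul]
  have hΓ' : Γ j x = (W x).det * (deriv (b' j) x - ∑ q, deriv (fun t => a' j t q) x * z x q) := by
    rw [hΓ]
    have h1 := aux_bordered (W x) (c x) (fun q => deriv (fun t => a' j t q) x) (z x)
      (deriv (b' j) x) (hWz x hx) (hdet x hx)
    simp only [dotProduct] at h1
    rw [← h1]
    congr 1
    ext p q
    simp only [aux_Wj m M N hMN]
    rcases p with p | p <;> rcases q with q | q <;>
      simp [Matrix.updateRow_apply, hc, ha, hb, hWdef]
  -- vanishing of y
  have hy0 : ∀ (i : Fin n), m ≤ (i : ℕ) → ∀ (k : ℕ) (hk : k < M), y (⟨k, by omega⟩, i) = 0 := by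
    intro i hi k
    induction k using Nat.strong_induction_on with
    | _ k ih =>
      intro hk
      have h1 := hyW (⟨k, by omega⟩, i)
      have h2 : a' j x (⟨k, by omega⟩, i) = 0 := by
        simp only [ha]
        rw [aux_Wblock_const m M N k (U k) j i hk hi (hUblk k hk), if_neg (by omega)]
      rw [h2, Finset.sum_eq_single (⟨k, by omega⟩, i)] at h1
      · have h3 : W x (⟨k, by omega⟩, i) (⟨k, by omega⟩, i) = 1 := by
          simp only [hWdef, Wmat, Matrix.of_apply]
          rw [aux_Wblock_const m M k k (U k) i i hk hi (hUblk k hk), if_pos ⟨rfl, le_rfl⟩]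
        rw [h3, mul_one] at h1
        exact h1
      · rintro ⟨⟨r, hr⟩, i'⟩ - hne
        simp only [hWdef, Wmat, Matrix.of_apply]
        rw [aux_Wblock_const m M r k (U k) i' i hk hi (hUblk k hk)]
        split_ifs with h
        · obtain ⟨rfl, h⟩ := h
          have hrk : r < k := by
            rcases h.lt_or_eq with h | h
            · exact h
            · subst h
              exact absurd rfl hne
          rw [ih r hrk (by omega), zero_mul]
        · rw [mul_zero]
      · intro h
        exact absurd (Finset.mem_univ _) h
  -- the key identity
  have hkey : ∑ q, a' j x q * deriv (fun t => z t q) x = ∑ l, φ l x * y (lastN, l) := by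
    have h1 : ∑ q, a' j x q * deriv (fun t => z t q) x
        = ∑ p, y p * (∑ q, W x p q * deriv (fun t => z t q) x) := by
      simp only [Finset.mul_sum, ← hyW, Finset.sum_mul]
      rw [Finset.sum_comm]
      refine Finset.sum_congr rfl fun p _ => Finset.sum_congr rfl fun q _ => by ring
    have h2 : ∀ (r : Fin N) (i : Fin n), y (r, i) * (∑ q, W x (r, i) q * deriv (fun t => z t q) x)
        = if r = lastN then φ i x * y (lastN, i) else 0 := by
      intro r i
      by_cases hcase : (i : ℕ) < m ∨ M ≤ (r : ℕ)
      · rw [hz']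
        have e1 : deriv (fun t => c t (r, i)) x = Wcol m M (r + 1) Ψ x i :=
          aux_Wcol_deriv m M r Ψ i hcase x
        have e2 : ∀ q : Fin N × Fin n, deriv (fun t => W t (r, i) q) x
            = Wblock m M (r + 1) (q.1 : ℕ) (U (q.1 : ℕ)) x i q.2 :=
          fun q => aux_Wblock_deriv m M r _ _ i q.2 hcase x
        simp only [e1, e2]
        split_ifs with hr
        · subst hr
          rw [hφz i x hx, mul_comm]
          have : (lastN : ℕ) + 1 = N := by simp only [hlast]; omega
          rw [this]
          rfl
        · have hr' : (r : ℕ) + 1 < N := by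
            have : (r : ℕ) ≠ N - 1 := fun h => hr (Fin.ext h)
            have := r.2
            omega
          have e3 := congrFun (hWz x hx) (⟨r + 1, hr'⟩, i)
          have e4 : ∑ q : Fin N × Fin n, Wblock m M (r + 1) (q.1 : ℕ) (U (q.1 : ℕ)) x i q.2 * z x q
            = Wcol m M (r + 1) Ψ x i := e3
          rw [e4, sub_self, mul_zero]
      · push Not at hcase
        have e0 : y (r, i) = 0 := hy0 i hcase.1 r hcase.2
        rw [e0, zero_mul]
        split_ifs with hr
        · subst hr
          rw [e0, mul_zero]
        · rfl
    rw [h1, Fintype.sum_prod_type]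
    simp only [h2]
    rw [Finset.sum_comm]
    simp
  rw [hφ', hΓ', hkey, eq_div_iff (hdet x hx)]
  simp only [hWij]
  rw [sub_mul, Finset.sum_mul, mul_comm]
  congr 1
  refine Finset.sum_congr rfl fun l _ => by ring


end SingularDarboux
end
end

section
/- Let U₁,…,U_N be as in the context. Then the derivative of the determinant of W satisfies (d/dx) det W(U₁,…,U_M;U_{M+1},…,U_N) = Σ_{l=1}^n det W_{l,l}(U₁,…,U_M;U_{M+1},…,U_N). -/
open Matrix

noncomputable section

namespace SingularDarboux

variable {n : ℕ}

theorem matD_iter (r : ℕ) (U : ℝ → Matrix (Fin n) (Fin n) ℝ) (i j : Fin n) :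
    (fun t => matD^[r] U t i j) = iteratedDeriv r (fun t => U t i j) := by
  induction r with
  | zero => simp
  | succ r ih =>
    rw [iteratedDeriv_succ, ← ih]
    funext t
    rw [Function.iterate_succ_apply']
    rfl

theorem matDm_iter (m r : ℕ) (U : ℝ → Matrix (Fin n) (Fin n) ℝ) (i j : Fin n) :
    (fun t => (matDm m)^[r] U t i j) =
      if (i : ℕ) < m then iteratedDeriv r (fun t => U t i j) else (fun t => U t i j) := by
  induction r with
  | zero => simp
  | succ r ih =>
    funext t
    rw [Function.iterate_succ_apply']
    split_ifs at ih ⊢ with h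
    · rw [iteratedDeriv_succ, ← ih]
      simp [matDm, h]
    · simp only [matDm, h, Matrix.of_apply, if_false]
      exact congrFun ih t

theorem iterDeriv_add (a b : ℕ) (f : ℝ → ℝ) :
    iteratedDeriv a (iteratedDeriv b f) = iteratedDeriv (a + b) f := by
  simp only [iteratedDeriv_eq_iterate, Function.iterate_add_apply]

theorem Wblock_low (m M r k : ℕ) (U : ℝ → Matrix (Fin n) (Fin n) ℝ) (i j : Fin n)
    (hi : (i : ℕ) < m) :
    (fun t => Wblock m M r k U t i j) = iteratedDeriv r (fun t => U t i j) := by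
  unfold Wblock
  split_ifs with h1 h2 h2
  · rw [matDm_iter, if_pos hi]
  · rw [matD_iter]
  · rw [matDm_iter, if_pos hi]
  · rw [matD_iter, matDm_iter, if_pos hi, iterDeriv_add]
    congr 1
    omega

theorem Wblock_high (m M r k : ℕ) (U : ℝ → Matrix (Fin n) (Fin n) ℝ) (i j : Fin n)
    (hi : ¬ (i : ℕ) < m) (hk : ¬ k < M) :
    (fun t => Wblock m M r k U t i j) = iteratedDeriv (r - M) (fun t => U t i j) := by
  unfold Wblock
  rw [if_neg hk]
  split_ifs with h2
  · rw [matDm_iter, if_neg hi, Nat.sub_eq_zero_of_le h2.le, iteratedDeriv_zero]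
  · rw [matD_iter, matDm_iter, if_neg hi]

theorem Wblock_const (m M r k : ℕ) (U : ℝ → Matrix (Fin n) (Fin n) ℝ) (i j : Fin n)
    (hU : BlockDiag m U) (hij : m ≤ (i : ℕ) ∨ m ≤ (j : ℕ)) (hk : k < M) :
    (fun t => Wblock m M r k U t i j) = fun _ => if r ≤ k ∧ i = j then 1 else 0 := by
  have hc : (fun t => U t i j) = fun _ => if i = j then (1 : ℝ) else 0 := by
    funext t; exact hU t i j hij
  unfold Wblock
  rw [if_pos hk]
  by_cases h1 : r ≤ k
  · rw [if_pos h1, matDm_iter, hc]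
    by_cases h2 : (i : ℕ) < m
    · have : i ≠ j := by
        rintro rfl
        omega
      rw [if_pos h2]
      funext t
      simp [iteratedDeriv_const, this]
    · rw [if_neg h2]
      simp [h1]
  · rw [if_neg h1, matD_iter, hc]
    funext t
    have : r ≠ 0 := by omega
    simp [iteratedDeriv_const, h1, this]

theorem Wblock_diff (m M r k : ℕ) (U : ℝ → Matrix (Fin n) (Fin n) ℝ) (i j : Fin n)
    (hs : SmoothMat U) (hU : k < M → BlockDiag m U) :
    Differentiable ℝ (fun t => Wblock m M r k U t i j) := by
  have key : ∀ a : ℕ, Differentiable ℝ (iteratedDeriv a (fun t => U t i j)) := fun a =>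
    (hs i j).differentiable_iteratedDeriv a (by exact_mod_cast ENat.natCast_lt_top a)
  by_cases hi : (i : ℕ) < m
  · rw [Wblock_low _ _ _ _ _ _ _ hi]; exact key _
  · by_cases hk : k < M
    · rw [Wblock_const _ _ _ _ _ _ _ (hU hk) (Or.inl (not_lt.1 hi)) hk]
      exact differentiable_const _
    · rw [Wblock_high _ _ _ _ _ _ _ hi hk]; exact key _

theorem Wblock_deriv (m M r k : ℕ) (U : ℝ → Matrix (Fin n) (Fin n) ℝ) (i j : Fin n)
    (hU : k < M → BlockDiag m U) (h : (i : ℕ) < m ∨ M ≤ r ∨ (k < M ∧ k ≤ r)) (x : ℝ) :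
    deriv (fun t => Wblock m M r k U t i j) x = Wblock m M (r + 1) k U x i j := by
  have e : Wblock m M (r + 1) k U x i j = (fun t => Wblock m M (r + 1) k U t i j) x := rfl
  rw [e]
  by_cases hi : (i : ℕ) < m
  · rw [Wblock_low _ _ _ _ _ _ _ hi, Wblock_low _ _ _ _ _ _ _ hi, iteratedDeriv_succ]
  · by_cases hk : k < M
    · rw [Wblock_const _ _ _ _ _ _ _ (hU hk) (Or.inl (not_lt.1 hi)) hk,
        Wblock_const _ _ _ _ _ _ _ (hU hk) (Or.inl (not_lt.1 hi)) hk]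
      have : ¬ (r + 1 ≤ k) := by omega
      simp [this]
    · rw [Wblock_high _ _ _ _ _ _ _ hi hk, Wblock_high _ _ _ _ _ _ _ hi hk,
        show r + 1 - M = (r - M) + 1 by omega, iteratedDeriv_succ]

theorem Wrow_eq (m M N k : ℕ) (hMN : M ≤ N) (hk : k < N) (U : ℝ → Matrix (Fin n) (Fin n) ℝ)
    (i : Fin n) (x : ℝ) : Wrow m M N k U i x = Wblock m M N k U x i := by
  unfold Wrow Wblock
  rw [if_neg (not_le.2 hk), if_neg (not_lt.2 hMN)]
  split_ifs <;> rfl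

theorem hasDerivAt_det {ι : Type*} [Fintype ι] [DecidableEq ι] (A : ℝ → Matrix ι ι ℝ)
    (x : ℝ) (A' : Matrix ι ι ℝ) (h : ∀ p q, HasDerivAt (fun t => A t p q) (A' p q) x) :
    HasDerivAt (fun t => (A t).det) (∑ p, ((A x).updateRow p (A' p)).det) x := by
  let f : ContinuousMultilinearMap ℝ (fun _ : ι => ι → ℝ) ℝ :=
    { (Matrix.detRowAlternating : (ι → ℝ) [⋀^ι]→ₗ[ℝ] ℝ).toMultilinearMap with
      cont := Continuous.matrix_det (A := fun B : ι → ι → ℝ => (B : Matrix ι ι ℝ))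
        continuous_id }
  have h1 : HasFDerivAt f (f.linearDeriv (A x)) (A x) := f.hasFDerivAt (A x)
  have h2 : HasDerivAt (fun t => (A t : ι → ι → ℝ)) A' x :=
    hasDerivAt_pi.2 fun p => hasDerivAt_pi.2 fun q => h p q
  have h3 := h1.comp_hasDerivAt x h2
  have h4 : f.linearDeriv (A x) A' = ∑ p, f (Function.update (A x) p (A' p)) :=
    ContinuousMultilinearMap.linearDeriv_apply f (A x) A'
  have h5 : HasDerivAt (fun t => f (A t)) (∑ p, f (Function.update (A x) p (A' p))) x :=
    h4 ▸ h3
  exact h5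

/-- The derivative of `det W(U₁,…,U_M;U_{M+1},…,U_N)` equals
`Σ_{l=1}^n det W_{l,l}(U₁,…,U_M;U_{M+1},…,U_N)`. -/
theorem deriv_det_Wmat {n : ℕ} (m M N : ℕ)
    (hm : 1 ≤ m) (hmn : m < n) (hM : 1 ≤ M) (hMN : M ≤ N)
    (U : ℕ → ℝ → Matrix (Fin n) (Fin n) ℝ)
    (hUsmooth : ∀ k < N, SmoothMat (U k)) (hUblk : ∀ k < M, BlockDiag m (U k)) :
    ∀ x : ℝ,
      deriv (fun t => (Wmat m M N U t).det) x
        = ∑ l : Fin n, (WijMat m M N l l U x).det := by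
  intro x
  have hd := hasDerivAt_det (Wmat m M N U) x
    (Matrix.of fun p q => deriv (fun t => Wmat m M N U t p q) x) (fun p q =>
      (Wblock_diff m M p.1 q.1 (U q.1) p.2 q.2 (hUsmooth _ q.1.2)
        (hUblk _) x).hasDerivAt)
  rw [hd.deriv, Fintype.sum_prod_type, Finset.sum_comm]
  refine Finset.sum_congr rfl fun i _ => ?_
  have hN : N - 1 < N := by omega
  rw [Finset.sum_eq_single (⟨N - 1, hN⟩ : Fin N)]
  · congr 1
    ext p q
    by_cases hp : p = (⟨N - 1, hN⟩, i)
    · subst hp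
      rw [Matrix.updateRow_self]
      simp only [WijMat, Matrix.of_apply, and_self, if_true]
      rw [Wrow_eq m M N q.1 hMN q.1.2]
      have hq := q.1.2
      refine (Wblock_deriv m M (N - 1) q.1 (U q.1) i q.2 (hUblk _) ?_ x).trans ?_
      · omega
      · rw [Nat.sub_add_cancel (by omega)]
    · rw [Matrix.updateRow_ne hp]
      have : ¬ ((p.1 : ℕ) = N - 1 ∧ p.2 = i) := by
        rintro ⟨h1, h2⟩
        exact hp (Prod.ext (Fin.ext h1) h2)
      simp only [WijMat, Matrix.of_apply, this, if_false]
      rfl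
  · intro r _ hr
    have hr' : (r : ℕ) + 1 < N := by
      have h1 := r.2
      have h2 : (r : ℕ) ≠ N - 1 := fun h => hr (Fin.ext h)
      omega
    by_cases hc : (i : ℕ) < m ∨ M ≤ (r : ℕ)
    · have hne : ((r, i) : Fin N × Fin n) ≠ (⟨r + 1, hr'⟩, i) := by
        intro h
        have := congrArg (fun z => (z.1 : ℕ)) h
        simp at this
      refine Matrix.det_zero_of_row_eq hne ?_
      rw [Matrix.updateRow_self, Matrix.updateRow_ne hne.symm]
      funext q
      exact Wblock_deriv m M r q.1 (U q.1) i q.2 (hUblk _) (by omega) x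
    · push Not at hc
      obtain ⟨hi, hrM⟩ := hc
      -- entries of the modified matrix in the columns `(k, i)`, `k < M`
      have ent : ∀ (k : Fin N), (k : ℕ) < M → ∀ p : Fin N × Fin n,
          ((Wmat m M N U x).updateRow (r, i)
            ((Matrix.of fun p q => deriv (fun t => Wmat m M N U t p q) x) (r, i))) p (k, i)
          = if p ≠ (r, i) ∧ (p.1 : ℕ) ≤ k ∧ p.2 = i then 1 else 0 := by
        intro k hk p
        have hcst := fun p : Fin N × Fin n =>
          Wblock_const m M p.1 k (U k) p.2 i (hUblk _ hk) (Or.inr hi) hk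
        by_cases hp : p = (r, i)
        · subst hp
          rw [Matrix.updateRow_self]
          simp only [Matrix.of_apply, ne_eq, not_true_eq_false, false_and, if_false]
          have := hcst (r, i)
          change deriv (fun t => Wblock m M r k (U k) t i i) x = 0
          rw [this]
          simp
        · rw [Matrix.updateRow_ne hp]
          simp only [ne_eq, hp, not_false_eq_true, true_and]
          exact congrFun (hcst p) x
      by_cases h0 : (r : ℕ) = 0
      · refine Matrix.det_eq_zero_of_column_eq_zero (r, i) fun p => ?_
        rw [ent r hrM p, if_neg]
        rintro ⟨h1, h2, h3⟩
        exact h1 (Prod.ext (Fin.ext (by simp only; omega)) h3)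
      · have hs : (r : ℕ) - 1 < N := by omega
        have hne : ((r, i) : Fin N × Fin n) ≠ (⟨r - 1, hs⟩, i) := by
          intro h
          have := congrArg (fun z => (z.1 : ℕ)) h
          simp at this
          omega
        refine Matrix.det_zero_of_column_eq hne fun p => ?_
        rw [ent r hrM p, ent ⟨r - 1, hs⟩ (by simp only; omega) p]
        refine if_congr ?_ rfl rfl
        constructor
        · rintro ⟨h1, h2, h3⟩
          refine ⟨h1, ?_, h3⟩
          have : (p.1 : ℕ) ≠ r := fun h => h1 (Prod.ext (Fin.ext h) h3)
          simp only
          omega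
        · rintro ⟨h1, h2, h3⟩
          simp only at h2
          exact ⟨h1, by omega, h3⟩
  · intro h
    exact absurd (Finset.mem_univ _) h

end SingularDarboux
end
end

section
/- Let U₁,…,U_N and Ψ be as in the context with det W(U₁,…,U_M;U_{M+1},…,U_N) ≠ 0, and for j, l ∈ {1,…,n} with l ≠ j let Δ_j^l denote the determinant of the matrix obtained from W_j(U₁,…,U_M;U_{M+1},…,U_N,Ψ) by differentiating, in each block of its last block-row of W-blocks (block-row r = N−1, including the appended column block), the l-th row. Then Δ_j^l = ( det W_{l,l}(U₁,…,U_M;U_{M+1},…,U_N) · det W_j(U₁,…,U_M;U_{M+1},…,U_N,Ψ) − det W_{j,l}(U₁,…,U_M;U_{M+1},…,U_N) · det W_l(U₁,…,U_M;U_{M+1},…,U_N,Ψ) ) / det W(U₁,…,U_M;U_{M+1},…,U_N). -/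
open Matrix

noncomputable section

namespace SingularDarboux

variable {n : ℕ}

theorem aux_det {ι : Type*} [Fintype ι] [DecidableEq ι] (A : Matrix ι ι ℝ) (hA : A.det ≠ 0)
    (b w w' : ι → ℝ) (a c : ℝ) (p : ι) :
    ((fromBlocks A (replicateCol Unit b) (replicateRow Unit w')
        (Matrix.of fun _ _ => c)).updateRow (Sum.inl p) (Sum.elim w fun _ => a)).det * A.det =
      (A.updateRow p w).det * (fromBlocks A (replicateCol Unit b) (replicateRow Unit w')
        (Matrix.of fun _ _ => c)).det
      - (A.updateRow p w').det * (fromBlocks A (replicateCol Unit b) (replicateRow Unit w)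
        (Matrix.of fun _ _ => a)).det := by
  have hu : IsUnit A.det := isUnit_iff_ne_zero.mpr hA
  set z : ι → ℝ := w ᵥ* A⁻¹ with hz
  have hw : w = ∑ i, z i • A i := by
    have h : z ᵥ* A = w := by
      rw [hz, Matrix.vecMul_vecMul, Matrix.nonsing_inv_mul _ hu, Matrix.vecMul_one]
    rw [← h]; funext k; rw [Finset.sum_apply]; rfl
  set d : ℝ := a - ∑ i, z i * b i with hd
  have h1 : (A.updateRow p w).det = z p * A.det := by
    conv_lhs => rw [hw]
    rw [det_updateRow_sum]; rfl
  -- the bordered determinant with last row (w, a)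
  have h2 : (fromBlocks A (replicateCol Unit b) (replicateRow Unit w)
        (Matrix.of fun _ _ => a)).det = d * A.det := by
    haveI : Invertible A := Matrix.invertibleOfIsUnitDet A hu
    rw [det_fromBlocks₁₁, mul_comm]
    congr 1
    rw [det_unique]
    have : replicateRow Unit w * ⅟A * replicateCol Unit b
        = Matrix.of fun _ _ => ∑ i, z i * b i := by
      rw [Matrix.invOf_eq_nonsing_inv]
      ext u v
      rfl
    rw [this]; rfl
  set F := fromBlocks A (replicateCol Unit b) (replicateRow Unit w')
        (Matrix.of fun _ _ => c) with hF
  have h3 : (Sum.elim w (fun _ : Unit => a) : ι ⊕ Unit → ℝ) =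
      (∑ i, (Sum.elim z (fun _ : Unit => (0 : ℝ)) : ι ⊕ Unit → ℝ) i • F i)
        + Sum.elim (0 : ι → ℝ) (fun _ : Unit => d) := by
    funext k
    rcases k with k | k
    · simpa [hF] using congrFun hw k
    · simp [hF, hd]
  have h4 : (F.updateRow (Sum.inl p) (Sum.elim (0 : ι → ℝ) (fun _ : Unit => d))).det
      = - ((A.updateRow p w').det * d) := by
    have e : F.updateRow (Sum.inl p) (Sum.elim (0 : ι → ℝ) (fun _ : Unit => d)) =
      (fromBlocks (A.updateRow p w') (replicateCol Unit (Function.update b p c)) 0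
        (Matrix.of fun _ _ : Unit => d)).submatrix
          (Equiv.swap (Sum.inl p) (Sum.inr ())) id := by
      ext i k
      rcases i with i | i
      · by_cases hi : i = p
        · subst hi
          rcases k with k | k <;> simp
        · rw [updateRow_ne (by simpa using hi), submatrix_apply,
            Equiv.swap_apply_of_ne_of_ne (by simpa using hi) (by simp)]
          rcases k with k | k <;> simp [hF, hi]
      · rw [updateRow_ne (by simp), submatrix_apply]
        rcases k with k | k <;> simp [hF]
    rw [e, det_permute, det_fromBlocks_zero₂₁, Equiv.Perm.sign_swap (by simp),
      det_unique (Matrix.of fun _ _ : Unit => d)]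
    simp
  rw [h3, det_updateRow_add, det_updateRow_sum, h4, h1, h2]
  simp only [Sum.elim_inl, smul_eq_mul]
  ring

theorem blockDiag_matDm {n m : ℕ} {U : ℝ → Matrix (Fin n) (Fin n) ℝ} (h : BlockDiag m U) :
    BlockDiag m (matDm m U) := by
  intro x i j hij
  by_cases hi : (i : ℕ) < m
  · have hne : i ≠ j := by rintro rfl; omega
    have : (fun t => U t i j) = fun _ => (0 : ℝ) := by
      funext t; rw [h t i j hij, if_neg hne]
    simp [matDm, hi, this, hne]
  · simp [matDm, hi, h x i j hij]

theorem blockDiag_iter {n m : ℕ} {U : ℝ → Matrix (Fin n) (Fin n) ℝ} (h : BlockDiag m U) (r : ℕ) :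
    BlockDiag m ((matDm m)^[r] U) := by
  induction r with
  | zero => exact h
  | succ r ih => rw [Function.iterate_succ_apply']; exact blockDiag_matDm ih

theorem matD_zero {n m : ℕ} {U : ℝ → Matrix (Fin n) (Fin n) ℝ} (h : BlockDiag m U) (r : ℕ)
    (i j : Fin n) (hij : m ≤ (i : ℕ) ∨ m ≤ (j : ℕ)) (x : ℝ) : matD^[r + 1] U x i j = 0 := by
  induction r generalizing x with
  | zero =>
    have : (fun t => U t i j) = fun _ => if i = j then (1 : ℝ) else 0 := by
      funext t; rw [h t i j hij]
    simp [matD, this]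
  | succ r ih =>
    rw [Function.iterate_succ_apply']
    simp [matD, -Function.iterate_succ] at ih ⊢
    have : (fun t => matD^[r + 1] U t i j) = fun _ => (0 : ℝ) := by
      funext t; exact ih t
    exact (congrArg (fun f => deriv f x) this).trans (by simp)

theorem matDm_eq {n m : ℕ} (U : ℝ → Matrix (Fin n) (Fin n) ℝ) (r : ℕ)
    (i j : Fin n) (hi : (i : ℕ) < m) (x : ℝ) :
    (matDm m)^[r] U x i j = matD^[r] U x i j := by
  induction r generalizing x with
  | zero => rfl
  | succ r ih =>
    rw [Function.iterate_succ_apply', Function.iterate_succ_apply']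
    have := funext ih
    simp only [matDm, matD, of_apply, hi, if_true]
    exact congrArg (fun f => deriv f x) this

theorem deriv_matD {n : ℕ} (U : ℝ → Matrix (Fin n) (Fin n) ℝ) (r : ℕ)
    (i j : Fin n) (x : ℝ) :
    deriv (fun t => matD^[r] U t i j) x = matD^[r + 1] U x i j := by
  rw [Function.iterate_succ_apply']; rfl

theorem deriv_Wblock {n m M N k : ℕ} (hM : 1 ≤ M) (hMN : M ≤ N) (hk : k < N)
    (U : ℝ → Matrix (Fin n) (Fin n) ℝ) (hU : k < M → BlockDiag m U) (l c : Fin n) (x : ℝ) :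
    deriv (fun t => Wblock m M (N - 1) k U t l c) x = Wrow m M N k U l x c := by
  obtain ⟨N, rfl⟩ : ∃ N', N = N' + 1 := ⟨N - 1, by omega⟩
  simp only [Nat.add_sub_cancel]
  unfold Wblock Wrow
  by_cases hkM : k < M
  · rw [if_pos hkM, if_pos hkM]
    by_cases hr : N ≤ k
    · rw [if_pos hr]
      by_cases hl : (l : ℕ) < m
      · have : (fun t => (matDm m)^[N] U t l c) = fun t => matD^[N] U t l c :=
          funext (matDm_eq U N l c hl)
        rw [this, deriv_matD]
      · have hl' : m ≤ (l : ℕ) ∨ m ≤ (c : ℕ) := Or.inl (by omega)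
        have : (fun t => (matDm m)^[N] U t l c) = fun _ => if l = c then (1 : ℝ) else 0 :=
          funext fun t => blockDiag_iter (hU hkM) N t l c hl'
        rw [this, matD_zero (hU hkM) N l c hl']
        simp
    · rw [if_neg hr, deriv_matD]
  · rw [if_neg hkM, if_neg hkM, if_neg (by omega), deriv_matD]
    have : N - M + 1 = N + 1 - M := by omega
    rw [this]

theorem deriv_Wcol {n m M N : ℕ} (hM : 1 ≤ M) (hMN : M ≤ N)
    (Ψ : ℝ → Fin n → ℝ) (l : Fin n) (h : M < N ∨ (l : ℕ) < m) (x : ℝ) :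
    deriv (fun t => Wcol m M (N - 1) Ψ t l) x = vecD^[N - M] ((vecDm m)^[M] Ψ) x l := by
  unfold Wcol
  by_cases hN : M < N
  · rw [if_neg (by omega)]
    have : N - M = (N - 1 - M) + 1 := by omega
    rw [this, Function.iterate_succ_apply']; rfl
  · obtain rfl : M = N := by omega
    have hl : (l : ℕ) < m := by omega
    rw [if_pos (by omega)]
    obtain ⟨M, rfl⟩ : ∃ N', M = N' + 1 := ⟨M - 1, by omega⟩
    rw [Nat.sub_self, Function.iterate_zero, id, Function.iterate_succ_apply']
    simp [vecDm, hl]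

/-- The formula for `Δ_j^l`, the determinant of `W_j(U₁,…,U_M;U_{M+1},…,U_N,Ψ)`
with the `l`-th row of its last block-row of `W`-blocks (block-row `r = N-1`,
including the appended column block) differentiated. -/
theorem Delta_jl_formula {n : ℕ} (m M N : ℕ)
    (hm : 1 ≤ m) (hmn : m < n) (hM : 1 ≤ M) (hMN : M ≤ N)
    (U : ℕ → ℝ → Matrix (Fin n) (Fin n) ℝ) (Ψ : ℝ → Fin n → ℝ)
    (hUsmooth : ∀ k < N, SmoothMat (U k)) (hUblk : ∀ k < M, BlockDiag m (U k))
    (hΨ : SmoothVec Ψ)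
    (j l : Fin n) (hlj : l ≠ j)
    (Δ : ℝ → ℝ)
    (hΔ : ∀ x, Δ x =
      ((WjMat m M N j U Ψ x).updateRow (Sum.inl (⟨N - 1, by omega⟩, l))
        (fun q =>
          deriv (fun t => WjMat m M N j U Ψ t (Sum.inl (⟨N - 1, by omega⟩, l)) q) x)).det) :
    ∀ x : ℝ, (Wmat m M N U x).det ≠ 0 →
      Δ x = ((WijMat m M N l l U x).det * (WjMat m M N j U Ψ x).det
              - (WijMat m M N j l U x).det * (WjMat m M N l U Ψ x).det)
            / (Wmat m M N U x).det := by
  intro x hx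
  set p : Fin N × Fin n := (⟨N - 1, by omega⟩, l) with hp
  set A := Wmat m M N U x with hA
  let w : Fin n → Fin N × Fin n → ℝ := fun i q => Wrow m M N (q.1 : ℕ) (U (q.1 : ℕ)) i x q.2
  let b : Fin N × Fin n → ℝ := fun q => Wcol m M (q.1 : ℕ) Ψ x q.2
  let c : Fin n → ℝ := fun i => vecD^[N - M] ((vecDm m)^[M] Ψ) x i
  have hW : ∀ i, WjMat m M N i U Ψ x = fromBlocks A (replicateCol Unit b)
      (replicateRow Unit (w i)) (Matrix.of fun _ _ => c i) := by
    intro i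
    ext u v
    rcases u with u | u <;> rcases v with v | v <;> rfl
  have hWij : ∀ i, WijMat m M N i l U x = A.updateRow p (w i) := by
    intro i
    ext u v
    by_cases hu : u = p
    · subst hu
      simp [WijMat, w, hp]
    · rw [updateRow_ne hu]
      have : ¬ ((u.1 : ℕ) = N - 1 ∧ u.2 = l) := by
        rintro ⟨h1, h2⟩
        exact hu (Prod.ext (Fin.ext h1) h2)
      simp only [WijMat, of_apply, if_neg this]
      rfl
  set a : ℝ := deriv (fun t => Wcol m M (N - 1) Ψ t l) x with ha
  have hrow : (fun q => deriv (fun t => WjMat m M N j U Ψ t (Sum.inl p) q) x)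
      = Sum.elim (w l) (fun _ => a) := by
    funext q
    rcases q with q | q
    · exact deriv_Wblock hM hMN q.1.2 _ (hUblk _) l q.2 x
    · rfl
  have key := aux_det A hx b (w l) (w j) a (c j) p
  rw [hΔ x, hrow, eq_div_iff hx, hWij, hWij, hW, hW, key]
  by_cases h : M < N ∨ (l : ℕ) < m
  · rw [ha, deriv_Wcol hM hMN Ψ l h x]
  · obtain rfl : M = N := by omega
    have hl : m ≤ (l : ℕ) := by omega
    have hz : (A.updateRow p (w j)).det = 0 := by
      have hwz : ∀ k : Fin M, w j (k, l) = 0 := by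
        intro k
        have := matD_zero (hUblk k k.2) (M - 1) j l (Or.inr hl) x
        rw [Nat.sub_add_cancel hM] at this
        simpa [w, Wrow] using this
      have hent : ∀ (k : Fin M) (r : Fin M) (i : Fin n), A (r, i) (k, l) =
          if (r : ℕ) ≤ k then (if i = l then 1 else 0) else 0 := by
        intro k r i
        simp only [hA, Wmat, of_apply, Wblock, if_pos k.2]
        split_ifs with h1 h2 h2
        · rw [blockDiag_iter (hUblk k k.2) r x i l (Or.inr hl), if_pos h2]
        · rw [blockDiag_iter (hUblk k k.2) r x i l (Or.inr hl), if_neg h2]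
        · have := matD_zero (hUblk k k.2) (r - 1) i l (Or.inr hl) x
          rwa [Nat.sub_add_cancel (by omega)] at this
      by_cases hM1 : M = 1
      · apply det_eq_zero_of_column_eq_zero p
        rintro ⟨r, i⟩
        by_cases hi : ((r, i) : Fin M × Fin n) = p
        · rw [hi, updateRow_self]; exact hwz _
        · rw [updateRow_ne hi, hp, hent]
          have : i ≠ l := by
            rintro rfl
            exact hi (Prod.ext (Fin.ext (by simp [hp]; omega)) rfl)
          simp [this]
      · apply det_zero_of_column_eq (i := p) (j := (⟨M - 2, by omega⟩, l))
        · intro h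
          have := congrArg (fun q : Fin M × Fin n => (q.1 : ℕ)) h
          simp [hp] at this
          omega
        · rintro ⟨r, i⟩
          by_cases hi : ((r, i) : Fin M × Fin n) = p
          · rw [hi, updateRow_self]
            exact (hwz _).trans (hwz _).symm
          · rw [updateRow_ne hi, hp, hent, hent]
            by_cases hil : i = l
            · subst hil
              have : (r : ℕ) ≠ M - 1 := fun h => hi (Prod.ext (Fin.ext h) rfl)
              have h2 := r.2
              have e1 : (r : ℕ) ≤ M - 1 := by omega
              have e2 : (r : ℕ) ≤ M - 2 := by omega
              simp [e1, e2]
            · simp [hil]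
    rw [hz]; ring

end SingularDarboux
end
end

section
/- Let 1 ≤ m < n, let Ũ₁ be a smooth m×m matrix-valued function of x with det Ũ₁(x) ≠ 0, set U₁ = diag(Ũ₁, I_{n−m}), and let Ψ = (ψ₁,…,ψₙ)ᵗ be a smooth n-vector-valued function. Define Φ = D_mΨ − (∂U₁)U₁⁻¹Ψ. Then for every l ∈ {1,…,n}, the l-th component of Φ equals φ_l = det W_l(U₁,Ψ) / det U₁, where W_l(U₁,Ψ) is the (n+1)×(n+1) matrix obtained from U₁ by appending the column Ψ on the right and, at the bottom, the row equal to the derivative of the l-th row of U₁, with corner entry ∂^{(m)}ψ_l. -/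
open Matrix

noncomputable section

namespace SingularDarboux

variable {n : ℕ}

/-- Action of a single singular Darboux transformation
`Φ = D_m Ψ − (∂U₁)U₁⁻¹ Ψ`, with `U₁ = diag(Ũ₁, I_{n-m})`: each component is the
ratio of a bordered determinant by `det U₁`. -/
theorem singular_first_order_action {n : ℕ} (m : ℕ) (hm : 1 ≤ m) (hmn : m < n)
    (U : ℝ → Matrix (Fin n) (Fin n) ℝ)
    (hUsmooth : SmoothMat U) (hUblk : BlockDiag m U)
    (hUdet : ∀ x, (U x).det ≠ 0)
    (Ψ : ℝ → Fin n → ℝ) (hΨ : SmoothVec Ψ)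
    (Φ : ℝ → Fin n → ℝ)
    (hΦ : ∀ x, Φ x = vecDm m Ψ x - (matD U x * (U x)⁻¹).mulVec (Ψ x)) :
    ∀ (l : Fin n) (x : ℝ),
      Φ x l =
        (Matrix.of (fun p q : Fin n ⊕ Unit =>
          match p, q with
          | Sum.inl i, Sum.inl j => U x i j
          | Sum.inl i, Sum.inr _ => Ψ x i
          | Sum.inr _, Sum.inl j => deriv (fun t => U t l j) x
          | Sum.inr _, Sum.inr _ => vecDm m Ψ x l)).det / (U x).det := by
  intro l x
  have hu : IsUnit (U x).det := isUnit_iff_ne_zero.mpr (hUdet x)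
  letI : Invertible (U x) := Matrix.invertibleOfIsUnitDet _ hu
  have hM : (Matrix.of (fun p q : Fin n ⊕ Unit =>
          match p, q with
          | Sum.inl i, Sum.inl j => U x i j
          | Sum.inl i, Sum.inr _ => Ψ x i
          | Sum.inr _, Sum.inl j => deriv (fun t => U t l j) x
          | Sum.inr _, Sum.inr _ => vecDm m Ψ x l)) =
      Matrix.fromBlocks (U x) (Matrix.of fun i (_ : Unit) => Ψ x i)
        (Matrix.of fun (_ : Unit) j => matD U x l j)
        (Matrix.of fun (_ _ : Unit) => vecDm m Ψ x l) := by
    ext p q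
    rcases p with p | p <;> rcases q with q | q <;> rfl
  rw [hM, Matrix.det_fromBlocks₁₁, mul_div_cancel_left₀ _ (hUdet x), Matrix.det_unique, hΦ,
    Matrix.invOf_eq_nonsing_inv]
  simp only [Pi.sub_apply, Matrix.sub_apply, Matrix.of_apply]
  congr 1

end SingularDarboux
end
end

section
/- Let M = N ≥ 2 and let U₁,…,U_N be as in the context (all of block-diagonal form diag(Ũ_k, I_{n−m})) with det W(U₁,…,U_{N−1}) ≠ 0. Write U_N = (U_{1;N},…,U_{n;N}) as a collection of its columns, and let Y_N be the n×n matrix with entries y_{ji} = det W_j(U₁,…,U_{N−1}, U_{i;N}) / det W(U₁,…,U_{N−1}). Then det Y_N = det W(U₁,…,U_N) / det W(U₁,…,U_{N−1}). -/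
open Matrix

noncomputable section

namespace SingularDarboux

variable {n : ℕ}

/-- Last-block splitting of the index set. -/
def splitEquiv (K n : ℕ) : (Fin K × Fin n) ⊕ Fin n ≃ Fin (K + 1) × Fin n where
  toFun := Sum.elim (fun p => (p.1.castSucc, p.2)) (fun i => (Fin.last K, i))
  invFun p := Fin.lastCases (motive := fun _ => (Fin K × Fin n) ⊕ Fin n)
    (Sum.inr p.2) (fun r => Sum.inl (r, p.2)) p.1
  left_inv := by
    rintro (⟨r, i⟩ | i) <;> simp
  right_inv := by
    rintro ⟨r, i⟩
    induction r using Fin.lastCases <;> simp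

theorem matDm_col (m r : ℕ) (V : ℝ → Matrix (Fin n) (Fin n) ℝ) (i : Fin n) :
    (vecDm m)^[r] (fun t l => V t l i) = fun t l => (matDm m)^[r] V t l i := by
  induction r generalizing V with
  | zero => rfl
  | succ r ih =>
    rw [Function.iterate_succ_apply, Function.iterate_succ_apply, ← ih]
    rfl

theorem schur_entry {ι κ : Type*} [Fintype ι] [DecidableEq ι] [Fintype κ] [DecidableEq κ]
    (A : Matrix ι ι ℝ) (B : Matrix ι κ ℝ) (C : Matrix κ ι ℝ) (D : Matrix κ κ ℝ)
    (hA : A.det ≠ 0) (j i : κ) :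
    (fromBlocks A (Matrix.of fun p (_ : Unit) => B p i) (Matrix.of fun (_ : Unit) q => C j q)
      (Matrix.of fun (_ : Unit) (_ : Unit) => D j i)).det / A.det = (D - C * A⁻¹ * B) j i := by
  have : Invertible A := A.invertibleOfIsUnitDet (isUnit_iff_ne_zero.mpr hA)
  rw [det_fromBlocks₁₁, mul_div_cancel_left₀ _ hA, det_unique, invOf_eq_nonsing_inv]
  simp [Matrix.mul_apply]

/-- Determinant of the matrix `Y_N` built from ratios of `W_j`-determinants
(columns of `U_N` as the appended vector), for a purely singular chain (`M = N`):
`det Y_N = det W(U₁,…,U_N) / det W(U₁,…,U_{N-1})`. -/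
theorem det_YN_formula {n : ℕ} (m N : ℕ) (hm : 1 ≤ m) (hmn : m < n) (hN : 2 ≤ N)
    (U : ℕ → ℝ → Matrix (Fin n) (Fin n) ℝ)
    (hUsmooth : ∀ k < N, SmoothMat (U k)) (hUblk : ∀ k < N, BlockDiag m (U k))
    (Y : ℝ → Matrix (Fin n) (Fin n) ℝ)
    (hY : ∀ (x : ℝ) (j i : Fin n),
      Y x j i =
        (WjMat m (N - 1) (N - 1) j U (fun t l => U (N - 1) t l i) x).det
          / (Wmat m (N - 1) (N - 1) U x).det) :
    ∀ x : ℝ, (Wmat m (N - 1) (N - 1) U x).det ≠ 0 →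
      (Y x).det = (Wmat m N N U x).det / (Wmat m (N - 1) (N - 1) U x).det := by
  intro x hA
  obtain ⟨K, rfl⟩ : ∃ K, N = K + 1 := ⟨N - 1, by omega⟩
  change (Wmat m K K U x).det ≠ 0 at hA
  change ∀ (x : ℝ) (j i : Fin n), Y x j i =
    (WjMat m K K j U (fun t l => U K t l i) x).det / (Wmat m K K U x).det at hY
  change (Y x).det = (Wmat m (K + 1) (K + 1) U x).det / (Wmat m K K U x).det
  set A := Wmat m K K U x with hAdef
  let B : Matrix (Fin K × Fin n) (Fin n) ℝ :=
    Matrix.of fun p i => (matDm m)^[(p.1 : ℕ)] (U K) x p.2 i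
  let C : Matrix (Fin n) (Fin K × Fin n) ℝ :=
    Matrix.of fun j q => matD^[K] (U (q.1 : ℕ)) x j q.2
  let D : Matrix (Fin n) (Fin n) ℝ := (matDm m)^[K] (U K) x
  have hYS : Y x = D - C * A⁻¹ * B := by
    ext j i
    rw [hY, ← schur_entry A B C D hA j i]
    congr 2
    ext p q
    rcases p with p | p <;> rcases q with q | q
    · rfl
    · simp [WjMat, Wcol, B, matDm_col]
    · simp [WjMat, Wrow, C]
    · simp [WjMat, D, matDm_col]
  have hW : (Wmat m (K + 1) (K + 1) U x).submatrix (splitEquiv K n) (splitEquiv K n)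
      = fromBlocks A B C D := by
    ext p q
    rcases p with ⟨r, p⟩ | p <;> rcases q with ⟨k, q⟩ | q
    · simp [splitEquiv, Wmat, Wblock, hAdef]
    · simp [splitEquiv, Wmat, Wblock, B, Fin.le_last]
    · simp [splitEquiv, Wmat, Wblock, C]
    · simp [splitEquiv, Wmat, Wblock, D]
  rw [← det_submatrix_equiv_self (splitEquiv K n), hW]
  have : Invertible A := A.invertibleOfIsUnitDet (isUnit_iff_ne_zero.mpr hA)
  rw [det_fromBlocks₁₁, mul_div_cancel_left₀ _ hA, invOf_eq_nonsing_inv, hYS]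

end SingularDarboux
end
end

section
/- Theorem 1 (resulting action of a chain of M singular and N−M ordinary matrix Darboux transformations): let U₁,…,U_N and Ψ be as in the context, and define the chain recursively by Y₁ = U₁, L^{(m)}_{1←0} = D_m − (∂Y₁)Y₁⁻¹; for 2 ≤ k ≤ M, Y_k = L_{(k−1)←0}U_k and L^{(m)}_{k←k−1} = D_m − (∂Y_k)Y_k⁻¹; for M < k ≤ N, Y_k = L_{(k−1)←0}U_k and L_{k←k−1} = I_n∂ − (∂Y_k)Y_k⁻¹; here L_{k←0} = L_{k←k−1}∘⋯∘L_{1←0} (the first M factors being the singular operators L^{(m)}), and each Y_k(x) is assumed invertible on the interval considered, with det W(U₁,…,U_M;U_{M+1},…,U_N) ≠ 0. Then the vector Φ = L_{N←0}Ψ = (φ₁,…,φₙ)ᵗ has components φ_j = det W_j(U₁,…,U_M;U_{M+1},…,U_N,Ψ) / det W(U₁,…,U_M;U_{M+1},…,U_N) for j = 1,…,n. -/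
open Matrix

noncomputable section

namespace SingularDarboux

variable {n : ℕ}

/-- A single Darboux transformation step acting on matrix-valued functions:
`D_m Z - (∂Y)Y⁻¹ Z` if `sing = true` (singular step) and `∂Z - (∂Y)Y⁻¹ Z` otherwise. -/
def LstepM (m : ℕ) (sing : Bool) (Y Z : ℝ → Matrix (Fin n) (Fin n) ℝ) :
    ℝ → Matrix (Fin n) (Fin n) ℝ :=
  fun x => (if sing then matDm m Z x else matD Z x) - matD Y x * (Y x)⁻¹ * Z x

/-- A single Darboux transformation step acting on vector-valued functions. -/
def LstepV (m : ℕ) (sing : Bool) (Y : ℝ → Matrix (Fin n) (Fin n) ℝ) (Ψ : ℝ → Fin n → ℝ) :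
    ℝ → Fin n → ℝ :=
  fun x => (if sing then vecDm m Ψ x else vecD Ψ x) - (matD Y x * (Y x)⁻¹).mulVec (Ψ x)

/-- `chainM m M U k Z = L_{k←0} Z`, the result of the first `k` transformation steps
applied to the matrix-valued function `Z`; the step of (0-indexed) number `s` is the
singular operator `L^{(m)} = D_m - (∂Y)Y⁻¹` when `s < M` and the regular operator
`∂ - (∂Y)Y⁻¹` otherwise, with transformation matrix `Y_{s+1} = chainM m M U s (U s)`
(so that `Y₁ = U 0`, the 0-indexed `U₁`). -/
def chainM (m M : ℕ) (U : ℕ → ℝ → Matrix (Fin n) (Fin n) ℝ) :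
    ℕ → (ℝ → Matrix (Fin n) (Fin n) ℝ) → ℝ → Matrix (Fin n) (Fin n) ℝ
  | 0, Z => Z
  | s + 1, Z => LstepM m (decide (s < M)) (chainM m M U s (U s)) (chainM m M U s Z)

/-- `chainV m M U k Ψ = L_{k←0} Ψ` for a vector-valued function `Ψ`. -/
def chainV (m M : ℕ) (U : ℕ → ℝ → Matrix (Fin n) (Fin n) ℝ) :
    ℕ → (ℝ → Fin n → ℝ) → ℝ → Fin n → ℝ
  | 0, Ψ => Ψ
  | s + 1, Ψ => LstepV m (decide (s < M)) (chainM m M U s (U s)) (chainV m M U s Ψ)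

/-- Smooth on the interval. -/
def SOn (a b : ℝ) (f : ℝ → ℝ) : Prop := ContDiffOn ℝ (⊤ : ℕ∞) f (Set.Ioo a b)

theorem SOn.deriv {a b : ℝ} {f : ℝ → ℝ} (h : SOn a b f) : SOn a b (fun x => deriv f x) := by
  unfold SOn at *
  exact ContDiffOn.deriv_of_isOpen h isOpen_Ioo (by exact_mod_cast le_top)

theorem SOn.diff {a b : ℝ} {f : ℝ → ℝ} (h : SOn a b f) {x : ℝ} (hx : x ∈ Set.Ioo a b) :
    DifferentiableAt ℝ f x :=
  (ContDiffOn.contDiffAt h (isOpen_Ioo.mem_nhds hx)).differentiableAt (by simp)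

theorem SOn.mul {a b : ℝ} {f g : ℝ → ℝ} (h : SOn a b f) (h' : SOn a b g) :
    SOn a b (fun x => f x * g x) := ContDiffOn.mul h h'

theorem SOn.add {a b : ℝ} {f g : ℝ → ℝ} (h : SOn a b f) (h' : SOn a b g) :
    SOn a b (fun x => f x + g x) := ContDiffOn.add h h'

theorem SOn.sub {a b : ℝ} {f g : ℝ → ℝ} (h : SOn a b f) (h' : SOn a b g) :
    SOn a b (fun x => f x - g x) := ContDiffOn.sub h h'

theorem SOn.const {a b : ℝ} (c : ℝ) : SOn a b (fun _ => c) := contDiffOn_const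

theorem SOn.sum {a b : ℝ} {ι : Type*} (s : Finset ι) {f : ι → ℝ → ℝ}
    (h : ∀ i ∈ s, SOn a b (f i)) : SOn a b (fun x => ∑ i ∈ s, f i x) := ContDiffOn.sum h

theorem SOn.prod {a b : ℝ} {ι : Type*} (s : Finset ι) {f : ι → ℝ → ℝ}
    (h : ∀ i ∈ s, SOn a b (f i)) : SOn a b (fun x => ∏ i ∈ s, f i x) := contDiffOn_prod h

/-- Entrywise smooth on the interval. -/
def SM (a b : ℝ) (Z : ℝ → Matrix (Fin n) (Fin n) ℝ) : Prop :=
  ∀ i j, SOn a b (fun x => Z x i j)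

theorem SM.matD {a b : ℝ} {Z : ℝ → Matrix (Fin n) (Fin n) ℝ} (h : SM a b Z) :
    SM a b (matD Z) := fun i j => (h i j).deriv

theorem SM.matDm {a b : ℝ} {Z : ℝ → Matrix (Fin n) (Fin n) ℝ} (m : ℕ) (h : SM a b Z) :
    SM a b (matDm m Z) := by
  intro i j
  by_cases hi : (i : ℕ) < m
  · simpa [SingularDarboux.matDm, hi] using (h i j).deriv
  · simpa [SingularDarboux.matDm, hi] using (h i j)

theorem SM.mul {a b : ℝ} {Z Z' : ℝ → Matrix (Fin n) (Fin n) ℝ} (h : SM a b Z) (h' : SM a b Z') :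
    SM a b (fun x => Z x * Z' x) := by
  intro i j
  simp only [Matrix.mul_apply]
  exact SOn.sum _ fun l _ => (h i l).mul (h' l j)

theorem SM.det {a b : ℝ} {Z : ℝ → Matrix (Fin n) (Fin n) ℝ} (h : SM a b Z) :
    SOn a b (fun x => (Z x).det) := by
  simp only [Matrix.det_apply']
  exact SOn.sum _ fun σ _ => (SOn.const _).mul (SOn.prod _ fun i _ => h _ _)

theorem SM.inv {a b : ℝ} {Z : ℝ → Matrix (Fin n) (Fin n) ℝ} (h : SM a b Z)
    (h0 : ∀ x ∈ Set.Ioo a b, (Z x).det ≠ 0) : SM a b (fun x => (Z x)⁻¹) := by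
  intro i j
  simp only [Matrix.inv_def, Ring.inverse_eq_inv', Matrix.smul_apply, smul_eq_mul,
    Matrix.adjugate_apply]
  refine SOn.mul (ContDiffOn.inv h.det h0) (SM.det ?_)
  intro k l
  by_cases hk : k = j
  · subst hk; simpa using SOn.const _
  · simpa [Matrix.updateRow_ne hk] using h k l

theorem deriv_zero_of_on {a b x : ℝ} (hx : x ∈ Set.Ioo a b) {f : ℝ → ℝ} {c : ℝ}
    (h : ∀ t ∈ Set.Ioo a b, f t = c) : deriv f x = 0 := by
  have : f =ᶠ[nhds x] fun _ => c := by
    filter_upwards [isOpen_Ioo.mem_nhds hx] with t ht using h t ht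
  rw [this.deriv_eq]; simp

theorem deriv_congr_on {a b x : ℝ} (hx : x ∈ Set.Ioo a b) {f g : ℝ → ℝ}
    (h : ∀ t ∈ Set.Ioo a b, f t = g t) : deriv f x = deriv g x := by
  have : f =ᶠ[nhds x] g := by
    filter_upwards [isOpen_Ioo.mem_nhds hx] with t ht using h t ht
  exact this.deriv_eq

/-- The coefficient `(∂Y)Y⁻¹` of step `s`. -/
def Bc (m M : ℕ) (U : ℕ → ℝ → Matrix (Fin n) (Fin n) ℝ) (s : ℕ) :
    ℝ → Matrix (Fin n) (Fin n) ℝ :=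
  fun x => matD (chainM m M U s (U s)) x * (chainM m M U s (U s) x)⁻¹

theorem chainM_succ_apply (m M : ℕ) (U : ℕ → ℝ → Matrix (Fin n) (Fin n) ℝ) (s : ℕ)
    (Z : ℝ → Matrix (Fin n) (Fin n) ℝ) (x : ℝ) (i j : Fin n) :
    chainM m M U (s+1) Z x i j =
      (if (i : ℕ) < m ∨ M ≤ s then deriv (fun t => chainM m M U s Z t i j) x
        else chainM m M U s Z x i j) - (Bc m M U s x * chainM m M U s Z x) i j := by
  by_cases hs : s < M <;> by_cases hi : (i : ℕ) < m <;>
    simp [chainM, LstepM, Bc, matD, matDm, hs, hi, Matrix.sub_apply, not_le.mpr]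

theorem chainV_succ_apply (m M : ℕ) (U : ℕ → ℝ → Matrix (Fin n) (Fin n) ℝ) (s : ℕ)
    (Z : ℝ → Fin n → ℝ) (x : ℝ) (i : Fin n) :
    chainV m M U (s+1) Z x i =
      (if (i : ℕ) < m ∨ M ≤ s then deriv (fun t => chainV m M U s Z t i) x
        else chainV m M U s Z x i) - ∑ l, Bc m M U s x i l * chainV m M U s Z x l := by
  by_cases hs : s < M <;> by_cases hi : (i : ℕ) < m <;>
    simp [chainV, LstepV, Bc, vecD, vecDm, hs, hi, Matrix.mulVec, dotProduct]

theorem chainM_col (m M : ℕ) (U : ℕ → ℝ → Matrix (Fin n) (Fin n) ℝ) (s : ℕ)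
    (Z : ℝ → Matrix (Fin n) (Fin n) ℝ) (j : Fin n) (x : ℝ) (i : Fin n) :
    chainM m M U s Z x i j = chainV m M U s (fun t i => Z t i j) x i := by
  induction s generalizing x i with
  | zero => rfl
  | succ s ih =>
    rw [chainM_succ_apply, chainV_succ_apply, Matrix.mul_apply]
    simp only [ih]

section main

variable {a b : ℝ} {m M N : ℕ} {U : ℕ → ℝ → Matrix (Fin n) (Fin n) ℝ}

theorem SM_chain (hU : ∀ k < N, SM a b (U k))
    (hY : ∀ s < N, ∀ x ∈ Set.Ioo a b, (chainM m M U s (U s) x).det ≠ 0)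
    (s : ℕ) (hs : s ≤ N) : ∀ Z, SM a b Z → SM a b (chainM m M U s Z) := by
  induction s with
  | zero => intro Z hZ; exact hZ
  | succ s ih =>
    intro Z hZ i j
    have ih := ih (by omega)
    have hYs := ih _ (hU s (by omega))
    have hB : SM a b (Bc m M U s) := hYs.matD.mul (hYs.inv (hY s (by omega)))
    simp only [chainM_succ_apply]
    refine SOn.sub ?_ (hB.mul (ih Z hZ) i j)
    split_ifs
    · exact (ih Z hZ i j).deriv
    · exact ih Z hZ i j

theorem SM_Bc (hU : ∀ k < N, SM a b (U k))
    (hY : ∀ s < N, ∀ x ∈ Set.Ioo a b, (chainM m M U s (U s) x).det ≠ 0)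
    (s : ℕ) (hs : s < N) : SM a b (Bc m M U s) := by
  have hYs := SM_chain hU hY s hs.le _ (hU s hs)
  exact hYs.matD.mul (hYs.inv (hY s hs))

theorem Bc_mul (hY : ∀ s < N, ∀ x ∈ Set.Ioo a b, (chainM m M U s (U s) x).det ≠ 0)
    (s : ℕ) (hs : s < N) (x : ℝ) (hx : x ∈ Set.Ioo a b) :
    Bc m M U s x * chainM m M U s (U s) x = matD (chainM m M U s (U s)) x := by
  rw [Bc, Matrix.mul_assoc, Matrix.nonsing_inv_mul _ (isUnit_iff_ne_zero.mpr (hY s hs x hx)),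
    Matrix.mul_one]

/-- Block diagonal on the interval. -/
def BD (a b : ℝ) (m : ℕ) (Z : ℝ → Matrix (Fin n) (Fin n) ℝ) : Prop :=
  ∀ x ∈ Set.Ioo a b, ∀ i j : Fin n, (m ≤ (i : ℕ) ∨ m ≤ (j : ℕ)) → Z x i j = if i = j then 1 else 0

theorem Bc_block (hY : ∀ s < N, ∀ x ∈ Set.Ioo a b, (chainM m M U s (U s) x).det ≠ 0)
    (s : ℕ) (hs : s < N) (hBD : BD a b m (chainM m M U s (U s)))
    (x : ℝ) (hx : x ∈ Set.Ioo a b) (i j : Fin n) (hij : m ≤ (i : ℕ) ∨ m ≤ (j : ℕ)) :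
    Bc m M U s x i j = 0 := by
  have hD : ∀ i j : Fin n, (m ≤ (i : ℕ) ∨ m ≤ (j : ℕ)) →
      matD (chainM m M U s (U s)) x i j = 0 := by
    intro i j h
    exact deriv_zero_of_on hx (fun t ht => hBD t ht i j h)
  rcases hij with hi | hj
  · rw [Bc, Matrix.mul_apply]
    exact Finset.sum_eq_zero fun l _ => by rw [hD i l (Or.inl hi), zero_mul]
  · have h1 := congrFun (congrFun (Bc_mul hY s hs x hx) i) j
    rw [hD i j (Or.inr hj), Matrix.mul_apply] at h1
    rw [← h1]
    have : ∀ l, chainM m M U s (U s) x l j = if l = j then 1 else 0 :=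
      fun l => hBD x hx l j (Or.inr hj)
    simp [this]

theorem BD_chain (hMN : M ≤ N) (hU : ∀ k < M, BD a b m (U k))
    (hY : ∀ s < N, ∀ x ∈ Set.Ioo a b, (chainM m M U s (U s) x).det ≠ 0)
    (s : ℕ) (hs : s ≤ M) : ∀ Z, BD a b m Z → BD a b m (chainM m M U s Z) := by
  induction s with
  | zero => intro Z hZ; exact hZ
  | succ s ih =>
    intro Z hZ x hx i j hij
    have ih := ih (by omega)
    have hB := Bc_block hY s (by omega) (ih _ (hU s (by omega))) x hx
    have hZ' := ih Z hZ
    have h0 : (Bc m M U s x * chainM m M U s Z x) i j = 0 := by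
      rw [Matrix.mul_apply]
      refine Finset.sum_eq_zero fun l _ => ?_
      by_cases h : m ≤ (i : ℕ) ∨ m ≤ (l : ℕ)
      · rw [hB i l h, zero_mul]
      · push Not at h
        have hj : m ≤ (j : ℕ) := by omega
        rw [hZ' x hx l j (Or.inr hj), if_neg, mul_zero]
        rintro rfl; omega
    rw [chainM_succ_apply, h0, sub_zero]
    split_ifs with h h' h'
    · subst h'; omega
    · exact deriv_zero_of_on hx (fun t ht => hZ' t ht i j hij)
    · rw [hZ' x hx i j hij, if_pos h']
    · rw [hZ' x hx i j hij, if_neg h']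

theorem Bc_zero (hMN : M ≤ N) (hU : ∀ k < M, BD a b m (U k))
    (hY : ∀ s < N, ∀ x ∈ Set.Ioo a b, (chainM m M U s (U s) x).det ≠ 0)
    (s : ℕ) (hs : s < M) (x : ℝ) (hx : x ∈ Set.Ioo a b) (i j : Fin n)
    (hij : m ≤ (i : ℕ) ∨ m ≤ (j : ℕ)) : Bc m M U s x i j = 0 :=
  Bc_block hY s (by omega) (BD_chain hMN hU hY s hs.le _ (hU s hs)) x hx i j hij

/-- Shift helper. -/
def shiftC (A : ℕ → ℝ → Matrix (Fin n) (Fin n) ℝ) : ℕ → ℝ → Matrix (Fin n) (Fin n) ℝ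
  | 0 => fun _ => 0
  | r + 1 => A r

/-- Coefficients of `L_{s←0}`. -/
def coefs (m M : ℕ) (U : ℕ → ℝ → Matrix (Fin n) (Fin n) ℝ) :
    ℕ → ℕ → ℝ → Matrix (Fin n) (Fin n) ℝ
  | 0 => fun r _ => if r = 0 then 1 else 0
  | s + 1 => fun r x => matD (coefs m M U s r) x + shiftC (coefs m M U s) r x
      - Bc m M U s x * coefs m M U s r x

theorem SM_coefs (hU : ∀ k < N, SM a b (U k))
    (hY : ∀ s < N, ∀ x ∈ Set.Ioo a b, (chainM m M U s (U s) x).det ≠ 0)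
    (s : ℕ) (hs : s ≤ N) : ∀ r, SM a b (coefs m M U s r) := by
  induction s with
  | zero => intro r i j; exact SOn.const _
  | succ s ih =>
    intro r i j
    have ih := ih (by omega)
    have h2 : SM a b (shiftC (coefs m M U s) r) := by
      cases r with
      | zero => intro i j; exact SOn.const _
      | succ r => exact ih r
    exact (((ih r).matD i j).add (h2 i j)).sub ((SM_Bc hU hY s (by omega)).mul (ih r) i j)

theorem coefs_struct (hMN : M ≤ N) (hU : ∀ k < M, BD a b m (U k))
    (hY : ∀ s < N, ∀ x ∈ Set.Ioo a b, (chainM m M U s (U s) x).det ≠ 0)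
    (s : ℕ) (hs : s ≤ N) :
    (∀ r, s < r → ∀ x ∈ Set.Ioo a b, coefs m M U s r x = 0) ∧
    (∀ x ∈ Set.Ioo a b, coefs m M U s s x = 1) ∧
    (∀ r, r < s → r < M → ∀ x ∈ Set.Ioo a b, ∀ i l : Fin n, m ≤ (l : ℕ) →
      coefs m M U s r x i l = 0) ∧
    (s ≤ M → ∀ r, r < s → ∀ x ∈ Set.Ioo a b, ∀ i l : Fin n, m ≤ (i : ℕ) →
      coefs m M U s r x i l = 0) := by
  induction s with
  | zero =>
    refine ⟨fun r hr x _ => ?_, fun x _ => ?_, fun r hr => by omega, fun _ r hr => by omega⟩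
    · have h0 : r ≠ 0 := by omega
      simp [coefs, h0]
    · simp [coefs]
  | succ s ih =>
    obtain ⟨h1, h2, h3, h4⟩ := ih (by omega)
    have d1 : ∀ r, s < r → ∀ x ∈ Set.Ioo a b, matD (coefs m M U s r) x = 0 := by
      intro r hr x hx
      ext i j
      exact deriv_zero_of_on (c := 0) hx (fun t ht => by rw [h1 r hr t ht]; rfl)
    have d2 : ∀ x ∈ Set.Ioo a b, matD (coefs m M U s s) x = 0 := by
      intro x hx
      ext i j
      exact deriv_zero_of_on (c := (1 : Matrix (Fin n) (Fin n) ℝ) i j) hx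
        (fun t ht => by rw [h2 t ht])
    refine ⟨fun r hr x hx => ?_, fun x hx => ?_, fun r hr hrM x hx i l hl => ?_,
      fun hsM r hr x hx i l hi => ?_⟩
    · obtain ⟨r, rfl⟩ : ∃ q, r = q + 1 := ⟨r - 1, by omega⟩
      simp [coefs, shiftC, d1 (r+1) (by omega) x hx, h1 (r+1) (by omega) x hx,
        h1 r (by omega) x hx]
    · simp [coefs, shiftC, d1 (s+1) (by omega) x hx, h1 (s+1) (by omega) x hx, h2 x hx]
    · have hsh : shiftC (coefs m M U s) r x i l = 0 := by
        cases r with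
        | zero => rfl
        | succ r => exact h3 r (by omega) (by omega) x hx i l hl
      simp only [coefs, Matrix.sub_apply, Matrix.add_apply, hsh]
      rcases Nat.lt_or_ge r s with h | h
      · have e1 : matD (coefs m M U s r) x i l = 0 :=
          deriv_zero_of_on hx (fun t ht => h3 r h hrM t ht i l hl)
        have e2 : (Bc m M U s x * coefs m M U s r x) i l = 0 := by
          rw [Matrix.mul_apply]
          exact Finset.sum_eq_zero fun q _ => by rw [h3 r h hrM x hx q l hl, mul_zero]
        rw [e1, e2]; simp
      · obtain rfl : r = s := by omega
        rw [d2 x hx, h2 x hx, Matrix.mul_one, Bc_zero hMN hU hY r hrM x hx i l (Or.inr hl)]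
        simp
    · have hsh : shiftC (coefs m M U s) r x i l = 0 := by
        cases r with
        | zero => rfl
        | succ r => exact h4 (by omega) r (by omega) x hx i l hi
      have e2 : (Bc m M U s x * coefs m M U s r x) i l = 0 := by
        rw [Matrix.mul_apply]
        exact Finset.sum_eq_zero fun q _ => by
          rw [Bc_zero hMN hU hY s (by omega) x hx i q (Or.inl hi), zero_mul]
      simp only [coefs, Matrix.sub_apply, Matrix.add_apply, hsh, e2]
      rcases Nat.lt_or_ge r s with h | h
      · have e1 : matD (coefs m M U s r) x i l = 0 :=
          deriv_zero_of_on hx (fun t ht => h4 (by omega) r h t ht i l hi)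
        rw [e1]; simp
      · obtain rfl : r = s := by omega
        rw [d2 x hx]; simp

/-- Admissible sequences. -/
structure Good (a b : ℝ) (m M : ℕ) (w : ℕ → ℝ → Fin n → ℝ) : Prop where
  sm : ∀ r i, SOn a b (fun x => w r x i)
  st : ∀ r (i : Fin n) x, ((i : ℕ) < m ∨ M ≤ r) → w (r+1) x i = deriv (fun t => w r t i) x

/-- Action of the coefficients on a sequence. -/
def op (m M : ℕ) (U : ℕ → ℝ → Matrix (Fin n) (Fin n) ℝ) (s : ℕ) (w : ℕ → ℝ → Fin n → ℝ) :
    ℝ → Fin n → ℝ :=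
  fun x i => ∑ r ∈ Finset.range (s+1), ∑ l, coefs m M U s r x i l * w r x l

theorem op_bot (hMN : M ≤ N) (hU : ∀ k < M, BD a b m (U k))
    (hY : ∀ s < N, ∀ x ∈ Set.Ioo a b, (chainM m M U s (U s) x).det ≠ 0)
    (s : ℕ) (hs : s ≤ M) (w : ℕ → ℝ → Fin n → ℝ) (x : ℝ) (hx : x ∈ Set.Ioo a b)
    (i : Fin n) (hi : m ≤ (i : ℕ)) : op m M U s w x i = w s x i := by
  obtain ⟨h1, h2, h3, h4⟩ := coefs_struct hMN hU hY s (by omega)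
  rw [op, Finset.sum_range_succ, Finset.sum_eq_zero, h2 x hx]
  · simp [Matrix.one_apply]
  · intro r hr
    rw [Finset.mem_range] at hr
    exact Finset.sum_eq_zero fun l _ => by rw [h4 hs r hr x hx i l hi, zero_mul]

theorem op_step (hMN : M ≤ N) (hU : ∀ k < M, BD a b m (U k)) (hUs : ∀ k < N, SM a b (U k))
    (hY : ∀ s < N, ∀ x ∈ Set.Ioo a b, (chainM m M U s (U s) x).det ≠ 0)
    (s : ℕ) (hs : s < N) (w : ℕ → ℝ → Fin n → ℝ) (hw : Good a b m M w)
    (x : ℝ) (hx : x ∈ Set.Ioo a b)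
    (i : Fin n) (hi : (i : ℕ) < m ∨ M ≤ s) :
    op m M U (s+1) w x i =
      deriv (fun t => op m M U s w t i) x - ∑ l, Bc m M U s x i l * op m M U s w x l := by
  obtain ⟨h1, h2, h3, h4⟩ := coefs_struct hMN hU hY s (by omega)
  have hsm := SM_coefs hUs hY s hs.le
  have hd : deriv (fun t => op m M U s w t i) x =
      ∑ r ∈ Finset.range (s+1), ∑ l, (matD (coefs m M U s r) x i l * w r x l +
        coefs m M U s r x i l * w (r+1) x l) := by
    unfold op
    rw [deriv_fun_sum]
    · refine Finset.sum_congr rfl fun r hr => ?_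
      rw [deriv_fun_sum]
      · refine Finset.sum_congr rfl fun l _ => ?_
        rw [deriv_fun_mul ((hsm r i l).diff hx) ((hw.sm r l).diff hx)]
        congr 1
        by_cases hl : (l : ℕ) < m ∨ M ≤ r
        · rw [hw.st r l x hl]
        · push Not at hl
          have : coefs m M U s r x i l = 0 := by
            rw [Finset.mem_range] at hr
            rcases Nat.lt_or_ge r s with h | h
            · exact h3 r h hl.2 x hx i l hl.1
            · obtain rfl : r = s := by omega
              rw [h2 x hx, Matrix.one_apply_ne]
              rintro rfl; omega
          rw [this]; simp
      · intro l _
        exact ((hsm r i l).mul (hw.sm r l)).diff hx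
    · intro r _
      exact (SOn.sum _ fun l _ => (hsm r i l).mul (hw.sm r l)).diff hx
  have hB : ∑ l, Bc m M U s x i l * op m M U s w x l =
      ∑ r ∈ Finset.range (s+1), ∑ l, (Bc m M U s x * coefs m M U s r x) i l * w r x l := by
    simp only [op, Matrix.mul_apply, Finset.mul_sum, Finset.sum_mul]
    rw [Finset.sum_comm]
    refine Finset.sum_congr rfl fun r _ => ?_
    rw [Finset.sum_comm]
    exact Finset.sum_congr rfl fun l _ => Finset.sum_congr rfl fun q _ => by ring
  have hz : matD (coefs m M U s (s+1)) x = 0 := by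
    ext i j
    exact deriv_zero_of_on (c := 0) hx (fun t ht => by rw [h1 (s+1) (by omega) t ht]; rfl)
  have hL : op m M U (s+1) w x i =
      (∑ r ∈ Finset.range (s+1), ∑ l, matD (coefs m M U s r) x i l * w r x l)
      + (∑ r ∈ Finset.range (s+1), ∑ l, coefs m M U s r x i l * w (r+1) x l)
      - ∑ r ∈ Finset.range (s+1), ∑ l, (Bc m M U s x * coefs m M U s r x) i l * w r x l := by
    simp only [op, coefs, Matrix.sub_apply, Matrix.add_apply, sub_mul, add_mul,
      Finset.sum_sub_distrib, Finset.sum_add_distrib]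
    congr 1
    · congr 1
      · rw [Finset.sum_range_succ, hz]; simp
      · rw [Finset.sum_range_succ']; simp [shiftC]
    · rw [Finset.sum_range_succ, h1 (s+1) (by omega) x hx]; simp
  rw [hL, hd, hB]
  simp only [Finset.sum_add_distrib]

end main

theorem Wcol_succ_top (m M r : ℕ) (Ψ : ℝ → Fin n → ℝ) (i : Fin n) (x : ℝ)
    (h : (i : ℕ) < m ∨ M ≤ r) :
    Wcol m M (r+1) Ψ x i = deriv (fun t => Wcol m M r Ψ t i) x := by
  unfold Wcol
  rcases Nat.lt_or_ge r M with hr | hr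
  · have hi : (i : ℕ) < m := by omega
    have e : (if r + 1 < M then (vecDm m)^[r+1] Ψ else vecD^[r+1-M] ((vecDm m)^[M] Ψ))
        = (vecDm m)^[r+1] Ψ := by
      split_ifs with h'
      · rfl
      · obtain rfl : M = r + 1 := by omega
        simp
    rw [e, if_pos hr, Function.iterate_succ_apply']
    simp [vecDm, hi]
  · rw [if_neg (by omega), if_neg (by omega), (by omega : r + 1 - M = (r - M) + 1),
      Function.iterate_succ_apply']
    rfl

theorem Wcol_succ_bot (m M r : ℕ) (Ψ : ℝ → Fin n → ℝ) (i : Fin n) (x : ℝ)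
    (h : ¬ ((i : ℕ) < m ∨ M ≤ r)) :
    Wcol m M (r+1) Ψ x i = Wcol m M r Ψ x i := by
  unfold Wcol
  push Not at h
  have e : (if r + 1 < M then (vecDm m)^[r+1] Ψ else vecD^[r+1-M] ((vecDm m)^[M] Ψ))
      = (vecDm m)^[r+1] Ψ := by
    split_ifs with h'
    · rfl
    · obtain rfl : M = r + 1 := by omega
      simp
  rw [e, if_pos h.2, Function.iterate_succ_apply']
  simp [vecDm, not_lt.mpr h.1]

theorem Wcol_zero (m M : ℕ) (hM : 1 ≤ M) (Ψ : ℝ → Fin n → ℝ) : Wcol m M 0 Ψ = Ψ := by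
  simp [Wcol, (by omega : 0 < M)]

theorem Wcol_good {a b : ℝ} (m M : ℕ) (hM : 1 ≤ M) (Ψ : ℝ → Fin n → ℝ)
    (h : ∀ i, SOn a b (fun x => Ψ x i)) : Good a b m M (fun r => Wcol m M r Ψ) := by
  refine ⟨fun r => ?_, fun r i x hi => Wcol_succ_top m M r Ψ i x hi⟩
  induction r with
  | zero => rw [Wcol_zero m M hM]; exact h
  | succ r ih =>
    intro i
    by_cases hi : (i : ℕ) < m ∨ M ≤ r
    · simp only [Wcol_succ_top m M r Ψ i _ hi]
      exact (ih i).deriv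
    · simp only [Wcol_succ_bot m M r Ψ i _ hi]
      exact ih i

theorem matDm_iter_col (m r : ℕ) (Z : ℝ → Matrix (Fin n) (Fin n) ℝ) (x : ℝ) (i j : Fin n) :
    (matDm m)^[r] Z x i j = (vecDm m)^[r] (fun t i => Z t i j) x i := by
  induction r generalizing x i with
  | zero => rfl
  | succ r ih =>
    simp only [Function.iterate_succ_apply', matDm, vecDm, Matrix.of_apply, ih]

theorem matD_iter_col (r : ℕ) (Z : ℝ → Matrix (Fin n) (Fin n) ℝ) (x : ℝ) (i j : Fin n) :
    matD^[r] Z x i j = vecD^[r] (fun t i => Z t i j) x i := by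
  induction r generalizing x i with
  | zero => rfl
  | succ r ih =>
    simp only [Function.iterate_succ_apply', matD, vecD, Matrix.of_apply, ih]

theorem Wblock_eq_Wcol (m M r k : ℕ) (h : r ≤ k ∨ M ≤ k) (Z : ℝ → Matrix (Fin n) (Fin n) ℝ)
    (x : ℝ) (i j : Fin n) :
    Wblock m M r k Z x i j = Wcol m M r (fun t i => Z t i j) x i := by
  have hc : (fun t i => (matDm m)^[M] Z t i j) = (vecDm m)^[M] (fun t i => Z t i j) := by
    funext t i; exact matDm_iter_col m M Z t i j
  unfold Wblock Wcol
  by_cases hk : k < M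
  · rw [if_pos hk, if_pos (by omega), if_pos (by omega), matDm_iter_col]
  · rw [if_neg hk]
    by_cases hr : r < M
    · rw [if_pos hr, if_pos hr, matDm_iter_col]
    · rw [if_neg hr, if_neg hr, matD_iter_col, hc]

theorem matDm_iter_top (m r : ℕ) (Z : ℝ → Matrix (Fin n) (Fin n) ℝ) (x : ℝ) (i j : Fin n)
    (hi : (i : ℕ) < m) : (matDm m)^[r] Z x i j = matD^[r] Z x i j := by
  induction r generalizing x with
  | zero => rfl
  | succ r ih =>
    simp only [Function.iterate_succ_apply', matD, matDm, Matrix.of_apply, ih, hi, if_true]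

theorem matD_iter_bot (m r : ℕ) (Z : ℝ → Matrix (Fin n) (Fin n) ℝ) (hZ : BlockDiag m Z)
    (x : ℝ) (i j : Fin n) (hi : m ≤ (i : ℕ)) : matD^[r+1] Z x i j = 0 := by
  induction r generalizing x with
  | zero =>
    simp only [zero_add, Function.iterate_one, matD, Matrix.of_apply]
    simp only [hZ _ i j (Or.inl hi)]
    simp
  | succ r ih =>
    rw [Function.iterate_succ_apply']
    simp only [matD, Matrix.of_apply]
    simp [ih]

theorem SM_iter_matD {a b : ℝ} {Z : ℝ → Matrix (Fin n) (Fin n) ℝ} (h : SM a b Z) (r : ℕ) :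
    SM a b (matD^[r] Z) := by
  induction r with
  | zero => exact h
  | succ r ih => rw [Function.iterate_succ_apply']; exact ih.matD

theorem Wblock_good {a b : ℝ} (m M k : ℕ) (hM : 1 ≤ M) (Z : ℝ → Matrix (Fin n) (Fin n) ℝ)
    (h : SM a b Z) (j : Fin n) :
    Good a b m M (fun r x i => Wblock m M r k Z x i j) := by
  have hg := Wcol_good (a := a) (b := b) m M hM (fun t i => Z t i j) (fun i => h i j)
  have hlarge : k < M → ∀ r, k < r → Wblock m M r k Z = matD^[r] Z := by
    intro hk r hr
    simp [Wblock, hk, not_le.mpr hr]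
  constructor
  · intro r i
    by_cases hr : r ≤ k ∨ M ≤ k
    · simp only [Wblock_eq_Wcol m M r k hr]
      exact hg.sm r i
    · push Not at hr
      simp only [hlarge hr.2 r hr.1]
      exact SM_iter_matD h r i j
  · intro r i x hi
    by_cases hr : r + 1 ≤ k ∨ M ≤ k
    · have hr' : r ≤ k ∨ M ≤ k := by omega
      simp only [Wblock_eq_Wcol m M _ k hr, Wblock_eq_Wcol m M _ k hr']
      exact hg.st r i x hi
    · push Not at hr
      have e : ∀ t, Wblock m M r k Z t i j = matD^[r] Z t i j := by
        intro t
        by_cases hrk : r ≤ k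
        · have : Wblock m M r k Z = (matDm m)^[r] Z := by simp [Wblock, hr.2, hrk]
          rw [this, matDm_iter_top]
          omega
        · rw [hlarge hr.2 r (by omega)]
      simp only [e, hlarge hr.2 (r+1) hr.1, Function.iterate_succ_apply']
      rfl

section main2

variable {a b : ℝ} {m M N : ℕ} {U : ℕ → ℝ → Matrix (Fin n) (Fin n) ℝ}

theorem chainV_eq_op (hM : 1 ≤ M) (hMN : M ≤ N) (hU : ∀ k < M, BD a b m (U k))
    (hUs : ∀ k < N, SM a b (U k))
    (hY : ∀ s < N, ∀ x ∈ Set.Ioo a b, (chainM m M U s (U s) x).det ≠ 0)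
    (Ψ : ℝ → Fin n → ℝ) (hΨ : ∀ i, SOn a b (fun x => Ψ x i)) (s : ℕ) (hs : s ≤ N) :
    ∀ x ∈ Set.Ioo a b, ∀ i,
      chainV m M U s Ψ x i = op m M U s (fun r => Wcol m M r Ψ) x i := by
  induction s with
  | zero =>
    intro x hx i
    simp [chainV, op, coefs, Wcol_zero m M hM, Matrix.one_apply]
  | succ s ih =>
    intro x hx i
    have ih := ih (by omega)
    rw [chainV_succ_apply]
    by_cases hi : (i : ℕ) < m ∨ M ≤ s
    · rw [if_pos hi, op_step hMN hU hUs hY s (by omega) _ (Wcol_good m M hM Ψ hΨ) x hx i hi,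
        deriv_congr_on hx (fun t ht => ih t ht i)]
      simp only [ih x hx]
    · rw [if_neg hi]
      have hi' := hi
      push Not at hi'
      rw [op_bot hMN hU hY (s+1) (by omega) _ x hx i hi'.1, ih x hx i,
        op_bot hMN hU hY s (by omega) _ x hx i hi'.1, Wcol_succ_bot m M s Ψ i x hi,
        Finset.sum_eq_zero, sub_zero]
      intro l _
      rw [Bc_zero hMN hU hY s hi'.2 x hx i l (Or.inl hi'.1), zero_mul]

theorem op_Wblock_zero (hM : 1 ≤ M) (hMN : M ≤ N) (hUb : ∀ k < M, BlockDiag m (U k))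
    (hUs : ∀ k < N, SM a b (U k))
    (hY : ∀ s < N, ∀ x ∈ Set.Ioo a b, (chainM m M U s (U s) x).det ≠ 0)
    (k : ℕ) (j : Fin n) (s : ℕ) (hks : k + 1 ≤ s) (hs : s ≤ N) :
    ∀ x ∈ Set.Ioo a b, ∀ i,
      op m M U s (fun r x i => Wblock m M r k (U k) x i j) x i = 0 := by
  have hU : ∀ k < M, BD a b m (U k) := fun k hk x _ i j h => hUb k hk x i j h
  have hbot : ∀ r, k < r → r ≤ M → ∀ x, ∀ i : Fin n, m ≤ (i : ℕ) →
      Wblock m M r k (U k) x i j = 0 := by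
    intro r hr hrM x i hi
    obtain ⟨q, rfl⟩ : ∃ q, r = q + 1 := ⟨r - 1, by omega⟩
    have : Wblock m M (q+1) k (U k) = matD^[q+1] (U k) := by
      simp only [Wblock, if_pos (show k < M by omega), if_neg (show ¬ (q + 1 ≤ k) by omega)]
    rw [this]
    exact matD_iter_bot m q _ (hUb k (by omega)) x i j hi
  induction s, hks using Nat.le_induction with
  | base =>
    intro x hx i
    have hgood := Wblock_good (a := a) (b := b) m M k hM (U k) (hUs k (by omega)) j
    have hop : ∀ t ∈ Set.Ioo a b, ∀ i,
        op m M U k (fun r x i => Wblock m M r k (U k) x i j) t i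
          = chainM m M U k (U k) t i j := by
      intro t ht i
      rw [chainM_col, chainV_eq_op hM hMN hU hUs hY _ (fun i => hUs k (by omega) i j) k
        (by omega) t ht i]
      refine Finset.sum_congr rfl fun r hr => ?_
      rw [Finset.mem_range] at hr
      refine Finset.sum_congr rfl fun l _ => ?_
      simp only [Wblock_eq_Wcol m M r k (Or.inl (by omega : r ≤ k))]
    by_cases hi : (i : ℕ) < m ∨ M ≤ k
    · rw [op_step hMN hU hUs hY k (by omega) _ hgood x hx i hi,
        deriv_congr_on hx (fun t ht => hop t ht i)]
      simp only [hop x hx]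
      have h1 := congrFun (congrFun (Bc_mul hY k (by omega) x hx) i) j
      rw [Matrix.mul_apply] at h1
      rw [h1]
      simp [matD]
    · push Not at hi
      rw [op_bot hMN hU hY (k+1) (by omega) _ x hx i hi.1]
      exact hbot (k+1) (by omega) (by omega) x i hi.1
  | succ s hks ih =>
    intro x hx i
    have ih := ih (by omega)
    have hgood := Wblock_good (a := a) (b := b) m M k hM (U k) (hUs k (by omega)) j
    by_cases hi : (i : ℕ) < m ∨ M ≤ s
    · rw [op_step hMN hU hUs hY s (by omega) _ hgood x hx i hi,
        deriv_zero_of_on hx (fun t ht => ih t ht i)]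
      simp only [ih x hx]
      simp
    · push Not at hi
      rw [op_bot hMN hU hY (s+1) (by omega) _ x hx i hi.1]
      exact hbot (s+1) (by omega) (by omega) x i hi.1

end main2

theorem det_bordered {ι : Type*} [Fintype ι] [DecidableEq ι] (A : Matrix ι ι ℝ)
    (c : Matrix ι Unit ℝ) (d : Matrix Unit ι ℝ) (e : Matrix Unit Unit ℝ) (v : Matrix Unit ι ℝ)
    (hv : v * A + d = 0) : (Matrix.fromBlocks A c d e).det = A.det * (v * c + e) () () := by
  have h : Matrix.fromBlocks 1 0 v 1 * Matrix.fromBlocks A c d e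
      = Matrix.fromBlocks A c 0 (v * c + e) := by
    rw [Matrix.fromBlocks_multiply]
    simp [hv]
  have h2 := congrArg Matrix.det h
  rw [Matrix.det_mul, Matrix.det_fromBlocks_zero₁₂, Matrix.det_fromBlocks_zero₂₁] at h2
  simpa using h2

/-- Theorem 1 of the paper: the resulting action of a chain of `M` singular and
`N - M` ordinary matrix Darboux transformations on a vector-valued function `Ψ`
is given by ratios of determinants:
`(L_{N←0}Ψ)_j = det W_j(U₁,…,U_M;U_{M+1},…,U_N,Ψ) / det W(U₁,…,U_M;U_{M+1},…,U_N)`. -/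
theorem chain_action_on_vector {n : ℕ} (m M N : ℕ)
    (hm : 1 ≤ m) (hmn : m < n) (hM : 1 ≤ M) (hMN : M ≤ N)
    (U : ℕ → ℝ → Matrix (Fin n) (Fin n) ℝ) (Ψ : ℝ → Fin n → ℝ)
    (hUsmooth : ∀ k < N, SmoothMat (U k)) (hUblk : ∀ k < M, BlockDiag m (U k))
    (hΨ : SmoothVec Ψ)
    (a b : ℝ)
    (hYinv : ∀ s < N, ∀ x ∈ Set.Ioo a b, (chainM m M U s (U s) x).det ≠ 0)
    (hdet : ∀ x ∈ Set.Ioo a b, (Wmat m M N U x).det ≠ 0) :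
    ∀ x ∈ Set.Ioo a b, ∀ j : Fin n,
      chainV m M U N Ψ x j =
        (WjMat m M N j U Ψ x).det / (Wmat m M N U x).det := by
  intro x hx j
  have hUs : ∀ k < N, SM a b (U k) := fun k hk i j => (hUsmooth k hk i j).contDiffOn
  have hU : ∀ k < M, BD a b m (U k) := fun k hk x _ i j h => hUblk k hk x i j h
  have hΨ' : ∀ i, SOn a b (fun x => Ψ x i) := fun i => (hΨ i).contDiffOn
  have hone := (coefs_struct hMN hU hYinv N le_rfl).2.1 x hx
  have hopN : ∀ w : ℕ → ℝ → Fin n → ℝ, op m M U N w x j =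
      (∑ p : Fin N × Fin n, coefs m M U N p.1 x j p.2 * w p.1 x p.2) + w N x j := by
    intro w
    rw [op, Finset.sum_range_succ, hone, Finset.sum_range, Fintype.sum_prod_type]
    simp [Matrix.one_apply]
  have hW : WjMat m M N j U Ψ x = Matrix.fromBlocks (Wmat m M N U x)
      (Matrix.of fun p _ => Wcol m M (p.1 : ℕ) Ψ x p.2)
      (Matrix.of fun _ q => Wrow m M N (q.1 : ℕ) (U (q.1 : ℕ)) j x q.2)
      (Matrix.of fun _ _ => vecD^[N - M] ((vecDm m)^[M] Ψ) x j) := by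
    ext p q
    rcases p with p | p <;> rcases q with q | q <;> rfl
  have hrow : ∀ k < N, ∀ l, Wrow m M N k (U k) j x l = Wblock m M N k (U k) x j l := by
    intro k hk l
    unfold Wrow Wblock
    by_cases hkM : k < M
    · simp [hkM, not_le.mpr hk]
    · simp [hkM, not_lt.mpr hMN]
  have hcor : vecD^[N - M] ((vecDm m)^[M] Ψ) x j = Wcol m M N Ψ x j := by
    simp [Wcol, not_lt.mpr hMN]
  rw [eq_div_iff (hdet x hx), hW, det_bordered _ _ _ _
    (Matrix.of fun _ p => coefs m M U N (p.1 : ℕ) x j p.2)]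
  · rw [chainV_eq_op hM hMN hU hUs hYinv Ψ hΨ' N le_rfl x hx j, hopN, mul_comm]
    simp [Matrix.mul_apply, hcor]
  · ext u q
    have h0 := op_Wblock_zero hM hMN hUblk hUs hYinv (q.1 : ℕ) q.2 N q.1.2 le_rfl x hx j
    rw [hopN] at h0
    simp only [Matrix.add_apply, Matrix.mul_apply, Matrix.of_apply, Wmat, Matrix.zero_apply]
    rw [hrow _ q.1.2]
    exact h0

end SingularDarboux
end
end
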